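/- arXiv:2405.00778 — 3 statements merged into one kernel-verified Lean document; each statement's English description precedes it below -/
import Mathlib

section
/- Let 0 ≤ a ≤ m and 0 ≤ b ≤ n. Every circuit of the bipartite rigidity matroid B_{m,n}(a,b) violates the (a,b)-Laman condition if and only if at least one of the following holds: (1) a ≤ 1, (2) b ≤ 1, (3) m − a ≤ 2, or (4) n − b ≤ 2. -/
open scoped Classical

noncomputable section

/-- The rational function field `ℚ(x_{pj}, y_{qℓ})` with `(p,j) ∈ [m]×[a]`,
`(q,ℓ) ∈ [n]×[b]`. -/
abbrev RField (m n a b : ℕ) :=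
  FractionRing (MvPolynomial ((Fin m × Fin a) ⊕ (Fin n × Fin b)) ℚ)

/-- The column of the bipartite rigidity matrix `R_{m,n}(a,b)` labeled by
`e ∈ [m]×[n]`: the row labeled `(j,k) ∈ [a]×[n]` has entry `x_{e.1, j}` if `e.2 = k`
and `0` otherwise, and the row labeled `(ℓ,i) ∈ [b]×[m]` has entry `y_{e.2, ℓ}` if
`e.1 = i` and `0` otherwise. -/
noncomputable def rigCol (m n a b : ℕ) (e : Fin m × Fin n) :
    (Fin a × Fin n) ⊕ (Fin b × Fin m) → RField m n a b := fun row =>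
  match row with
  | Sum.inl (j, k) =>
      if e.2 = k then
        algebraMap (MvPolynomial ((Fin m × Fin a) ⊕ (Fin n × Fin b)) ℚ) (RField m n a b)
          (MvPolynomial.X (Sum.inl (e.1, j)))
      else 0
  | Sum.inr (l, i) =>
      if e.1 = i then
        algebraMap (MvPolynomial ((Fin m × Fin a) ⊕ (Fin n × Fin b)) ℚ) (RField m n a b)
          (MvPolynomial.X (Sum.inr (e.2, l)))
      else 0

/-- `G` is independent in the bipartite rigidity matroid `B_{m,n}(a,b)`: the columns of
`R_{m,n}(a,b)` indexed by `G` are linearly independent. -/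
def RigIndep (m n a b : ℕ) (G : Set (Fin m × Fin n)) : Prop :=
  LinearIndependent (RField m n a b) (fun e : G => rigCol m n a b e)

/-- `U` violates the `(a,b)`-Laman condition: there are `S ⊆ [m]`, `T ⊆ [n]` with
`|S| ≥ a`, `|T| ≥ b` and `|U ∩ (S×T)| > |S|·b + |T|·a − a·b` (stated additively to
avoid truncated subtraction). -/
def ViolatesLaman (m n a b : ℕ) (U : Finset (Fin m × Fin n)) : Prop :=
  ∃ S : Finset (Fin m), ∃ T : Finset (Fin n), a ≤ S.card ∧ b ≤ T.card ∧
    S.card * b + T.card * a < (U ∩ S ×ˢ T).card + a * b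

/-- `U` is a minimal set violating the `(a,b)`-Laman condition. -/
def MinimalLamanViolator (m n a b : ℕ) (U : Finset (Fin m × Fin n)) : Prop :=
  ViolatesLaman m n a b U ∧ ∀ V : Finset (Fin m × Fin n), V ⊂ U → ¬ ViolatesLaman m n a b V

/-- `C` is a circuit of the bipartite rigidity matroid `B_{m,n}(a,b)`: a minimal set
indexing linearly dependent columns of `R_{m,n}(a,b)`. -/
def RigCircuit (m n a b : ℕ) (C : Finset (Fin m × Fin n)) : Prop :=
  ¬ RigIndep m n a b (↑C : Set (Fin m × Fin n)) ∧
    ∀ D : Finset (Fin m × Fin n), D ⊂ C → RigIndep m n a b (↑D : Set (Fin m × Fin n))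

/-!
A set `U` of edges is independent exactly when the generic points `x p`, `y q` admit no nonzero
stress on `U`, and for this it suffices that some rational points admit none. Suppose that `U`
satisfies the Laman condition. If `m ≤ a + 1`, or if `b = 0`, any points in general position will
do. If `m = a + 2`, take the `x p` in general position and colour the vertices `q` of degree greater
than `a` with `b` colours, letting `y q` be the basis vector of its colour; the Laman condition
provides a colouring for which every column of a stress has at most `a` nonzero entries, so it
vanishes. If `b = 1`, take all `y q` equal to `1` and let the dependencies of the `x p` be the row
space of a generic matrix with prescribed row supports: by Hall's theorem, the columns of a stress
lie in independent subspaces, and they sum to `0`.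

Conversely, if `2 ≤ a ≤ m - 3` and `2 ≤ b ≤ n - 3`, remove from `K_{a+3,b+3}` disjoint holes
`2 × 2`, `2 × 2` and `1 × 1`. Let `f i`, `g i` be dependencies of the `x p` and of the `y q` that
avoid the `i`-th block. Then `f 0 ⊗ g 1` and `f 1 ⊗ g 0` vanish on the two large holes, and some
combination of them also vanishes on the single missing edge, so it is a stress.
-/

open Matrix

section LinearAlgebra

variable {ι κ K : Type*} [Field K]

lemma linearIndepOn_row_iff [Fintype ι] {A : Matrix ι κ K} {s : Finset ι} :
    LinearIndepOn K A.row (s : Set ι) ↔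
      ∀ w : ι → K, (∀ i ∉ s, w i = 0) → w ᵥ* A = 0 → w = 0 := by
  simp_rw [linearIndepOn_finset_iff, vecMul_eq_sum]
  refine ⟨fun h w hs hw ↦ funext fun i ↦ ?_, fun h w hw i hi ↦ ?_⟩
  · by_cases hi : i ∈ s
    · refine h w ?_ i hi
      rw [← hw]
      exact Finset.sum_subset s.subset_univ fun i _ hi ↦ by simp [hs i hi]
    · exact hs i hi
  · have hrestrict := h (fun i ↦ if i ∈ s then w i else 0) (by simp_all) (by simpa [row] using hw)
    simpa [hi] using congrFun hrestrict i

lemma exists_vecMul_eq_zero_of_card_lt [Fintype ι] [Fintype κ] (A : Matrix ι κ K) {s : Finset ι}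
    (hs : Fintype.card κ < s.card) :
    ∃ w : ι → K, w ≠ 0 ∧ (∀ i ∉ s, w i = 0) ∧ w ᵥ* A = 0 := by
  have hdep : ¬ LinearIndepOn K A.row (s : Set ι) := fun h ↦ by
    have := LinearIndependent.fintype_card_le_finrank h
    simp only [Finset.coe_sort_coe, Fintype.card_coe, Module.finrank_fintype_fun_eq_card] at this
    omega
  rw [linearIndepOn_row_iff] at hdep
  push Not at hdep
  obtain ⟨w, hs, hw, hne⟩ := hdep
  exact ⟨w, hne, hs, hw⟩

/-- If the specialized rows are independent over `K`, then they have a right inverse `B` over `K`;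
the determinant of `A * B` specializes to `1`, so it does not vanish. -/
lemma linearIndependent_row_of_specialization [Finite ι] [Finite κ] {R F : Type*} [CommRing R]
    [Algebra K R] [CommRing F] [IsDomain F] (ψ : R →ₐ[K] K) {φ : R →+* F}
    (hφ : Function.Injective φ) (A : Matrix ι κ R) (h : LinearIndependent K (A.map ψ).row) :
    LinearIndependent F (A.map φ).row := by
  cases nonempty_fintype ι
  cases nonempty_fintype κ
  obtain ⟨B, hB⟩ : ∃ B : Matrix κ ι K, A.map ψ * B = 1 := by
    rw [← mulVec_surjective_iff_exists_right_inverse, ← coe_mulVecLin, ← LinearMap.range_eq_top]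
    apply Submodule.eq_top_of_finrank_eq
    rw [Module.finrank_fintype_fun_eq_card]
    exact h.rank_matrix
  set C := A * B.map (algebraMap K R)
  have hψ : ψ C.det = 1 := by
    have hmap : C.map ψ = 1 := by
      rw [Matrix.map_mul, ← hB, Matrix.map_map]
      congr
      ext
      simp
    rw [AlgHom.map_det, AlgHom.mapMatrix_apply, hmap, det_one]
  have hdet : (C.map φ).det ≠ 0 := by
    rw [← RingHom.mapMatrix_apply, ← RingHom.map_det, map_ne_zero_iff φ hφ]
    exact ne_zero_of_map (f := ψ) (by simp [hψ])
  rw [Matrix.map_mul] at hdet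
  have hinj := vecMul_injective_iff.2 (linearIndependent_rows_of_det_ne_zero hdet)
  rw [← vecMul_injective_iff]
  refine .of_comp (f := fun v ↦ v ᵥ* (B.map (algebraMap K R)).map φ) ?_
  simpa only [Function.comp_def, vecMul_vecMul] using hinj

lemma linearIndepOn_row_of_specialization [Finite ι] [Finite κ] {R F : Type*} [CommRing R]
    [Algebra K R] [CommRing F] [IsDomain F] (ψ : R →ₐ[K] K) {φ : R →+* F}
    (hφ : Function.Injective φ) (A : Matrix ι κ R) {s : Set ι}
    (h : LinearIndepOn K (A.map ψ).row s) : LinearIndepOn F (A.map φ).row s :=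
  linearIndependent_row_of_specialization ψ hφ (A.submatrix ((↑) : s → ι) id) h

/-- The rows of `A` are points in general position: any set of at most `card κ` of them is
linearly independent. -/
def GeneralPosition [Fintype κ] (A : Matrix ι κ K) : Prop :=
  ∀ s : Finset ι, s.card ≤ Fintype.card κ → LinearIndepOn K A.row (s : Set ι)

lemma GeneralPosition.eq_zero_of_vecMul_eq_zero [Fintype ι] [Fintype κ] {A : Matrix ι κ K}
    (hA : GeneralPosition A) {s : Finset ι} (hs : s.card ≤ Fintype.card κ) {w : ι → K}
    (hws : ∀ i ∉ s, w i = 0) (hw : w ᵥ* A = 0) : w = 0 :=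
  linearIndepOn_row_iff.1 (hA s hs) w hws hw

lemma generalPosition_rectVandermonde {v : ι → K} (hv : Function.Injective v) (n : ℕ) :
    GeneralPosition (rectVandermonde v 1 n) := by
  intro s hs
  rw [Fintype.card_fin] at hs
  have hdet : IsUnit (vandermonde fun i ↦ v (s.equivFin.symm i)) := by
    rw [isUnit_iff_isUnit_det, isUnit_iff_ne_zero, det_vandermonde_ne_zero_iff]
    exact hv.comp (Subtype.val_injective.comp s.equivFin.symm.injective)
  have hrows := linearIndependent_rows_of_isUnit hdet
  refine (linearIndependent_equiv s.equivFin.symm).1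
    (.of_comp (LinearMap.funLeft K K (Fin.castLE hs)) ?_)
  convert hrows
  ext i j
  simp [rectVandermonde_apply, vandermonde_apply, LinearMap.funLeft_apply]

lemma GeneralPosition.of_specialization [Finite ι] [Fintype κ] {R F : Type*} [CommRing R]
    [Algebra K R] [Field F] (ψ : R →ₐ[K] K) {φ : R →+* F} (hφ : Function.Injective φ)
    {A : Matrix ι κ R} (h : GeneralPosition (A.map ψ)) : GeneralPosition (A.map φ) :=
  fun s hs ↦ linearIndepOn_row_of_specialization ψ hφ A (h s hs)

end LinearAlgebra

section Stress

variable {P Q α β R K : Type*} [Field K]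

/-- `W` is a stress of the bipartite graph `U` realized by the points `x p` and `y q`: a weighting
of the edges of `U` such that the weighted sums of the `x p` at every `q` and of the `y q` at every
`p` vanish. -/
structure IsStress [Fintype P] [Fintype Q] (x : Matrix P α K) (y : Matrix Q β K)
    (U : Finset (P × Q)) (W : Matrix P Q K) : Prop where
  support : ∀ p q, (p, q) ∉ U → W p q = 0
  left : Wᵀ * x = 0
  right : W * y = 0

/-- The graph `U` realized at `x`, `y` carries no nonzero stress. -/
def StressFree [Fintype P] [Fintype Q] (x : Matrix P α K) (y : Matrix Q β K)
    (U : Finset (P × Q)) : Prop :=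
  ∀ W, IsStress x y U W → W = 0

/-- The transpose of the rigidity matrix of the realization `x`, `y`, with one row for each
edge of the complete bipartite graph. -/
def rigidityVectors [DecidableEq P] [DecidableEq Q] [Zero R] (x : Matrix P α R)
    (y : Matrix Q β R) : Matrix (P × Q) (α × Q ⊕ β × P) R :=
  of fun e ↦ Sum.elim (fun jk ↦ if e.2 = jk.2 then x e.1 jk.1 else 0)
    fun li ↦ if e.1 = li.2 then y e.2 li.1 else 0

lemma rigidityVectors_map [DecidableEq P] [DecidableEq Q] [Zero R] {S : Type*} [Zero S]
    (x : Matrix P α R) (y : Matrix Q β R) {φ : R → S} (hφ : φ 0 = 0) :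
    (rigidityVectors x y).map φ = rigidityVectors (x.map φ) (y.map φ) := by
  ext e (jk | li) <;> simp [rigidityVectors, apply_ite φ, hφ]

lemma vecMul_rigidityVectors_eq_zero_iff [Fintype P] [Fintype Q] [DecidableEq P] [DecidableEq Q]
    {x : Matrix P α K} {y : Matrix Q β K} {w : P × Q → K} :
    w ᵥ* rigidityVectors x y = 0 ↔
      (of (Function.curry w))ᵀ * x = 0 ∧ of (Function.curry w) * y = 0 := by
  simp only [funext_iff, ← Matrix.ext_iff, Sum.forall, Prod.forall, vecMul, dotProduct,
    rigidityVectors, Fintype.sum_prod_type, Matrix.mul_apply]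
  simp only [of_apply, Sum.elim_inl, Sum.elim_inr, mul_ite, mul_zero, Finset.sum_ite_eq',
    Finset.mem_univ, if_true, Finset.sum_ite_irrel, Finset.sum_const_zero, transpose_apply,
    Function.curry_apply, Matrix.zero_apply, Pi.zero_apply]
  exact ⟨fun h ↦ ⟨fun q j ↦ h.1 j q, fun p l ↦ h.2 l p⟩,
    fun h ↦ ⟨fun j q ↦ h.1 q j, fun l p ↦ h.2 p l⟩⟩

lemma stressFree_iff_linearIndepOn [Fintype P] [Fintype Q] [DecidableEq P] [DecidableEq Q]
    {x : Matrix P α K} {y : Matrix Q β K} {U : Finset (P × Q)} :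
    StressFree x y U ↔ LinearIndepOn K (rigidityVectors x y).row (U : Set (P × Q)) := by
  rw [linearIndepOn_row_iff]
  constructor
  · intro h w hwU hw
    obtain ⟨hleft, hright⟩ := vecMul_rigidityVectors_eq_zero_iff.1 hw
    have hW := h (of (Function.curry w)) ⟨fun p q ↦ hwU (p, q), hleft, hright⟩
    exact funext fun e ↦ congrFun₂ hW e.1 e.2
  · intro h W hW
    have hw := h (Function.uncurry W) (fun e ↦ hW.support e.1 e.2)
      (vecMul_rigidityVectors_eq_zero_iff.2 ⟨hW.left, hW.right⟩)
    ext p q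
    exact congrFun hw (p, q)

variable [Fintype P] [Fintype Q] {x : Matrix P α K} {y : Matrix Q β K} {U : Finset (P × Q)}
  {W : Matrix P Q K}

lemma IsStress.row_vecMul_eq_zero (hW : IsStress x y U W) (p : P) : W p ᵥ* y = 0 := by
  rw [← mul_apply_eq_vecMul, hW.right]
  rfl

lemma IsStress.col_vecMul_eq_zero (hW : IsStress x y U W) (q : Q) : Wᵀ q ᵥ* x = 0 := by
  rw [← mul_apply_eq_vecMul, hW.left]
  rfl

lemma IsStress.transpose (hW : IsStress x y U W) :
    IsStress y x (U.map (Equiv.prodComm P Q).toEmbedding) Wᵀ where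
  support q p hqp := hW.support p q fun h ↦ hqp (by simpa using h)
  left := by rw [transpose_transpose, hW.right]
  right := hW.left

lemma StressFree.of_transpose (h : StressFree y x (U.map (Equiv.prodComm P Q).toEmbedding)) :
    StressFree x y U :=
  fun W hW ↦ transpose_eq_zero.1 (h Wᵀ hW.transpose)

end Stress

section GenericPoint

variable (m n a b : ℕ)

/-- The points `x p` over the polynomial ring `ℚ[x_{pj}, y_{qℓ}]`. -/
def genericLeft : Matrix (Fin m) (Fin a) (MvPolynomial (Fin m × Fin a ⊕ Fin n × Fin b) ℚ) :=
  of fun p j ↦ MvPolynomial.X (Sum.inl (p, j))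

/-- The points `y q` over the polynomial ring `ℚ[x_{pj}, y_{qℓ}]`. -/
def genericRight : Matrix (Fin n) (Fin b) (MvPolynomial (Fin m × Fin a ⊕ Fin n × Fin b) ℚ) :=
  of fun q l ↦ MvPolynomial.X (Sum.inr (q, l))

lemma rigCol_eq_rigidityVectors_row :
    rigCol m n a b =
      ((rigidityVectors (genericLeft m n a b) (genericRight m n a b)).map
        (algebraMap _ (RField m n a b))).row := by
  funext e r
  rcases r with ⟨j, k⟩ | ⟨l, i⟩
  · by_cases h : e.2 = k <;> simp [rigCol, rigidityVectors, genericLeft, h]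
  · by_cases h : e.1 = i <;> simp [rigCol, rigidityVectors, genericRight, h]

variable {m n a b}

lemma rigIndep_iff_stressFree {U : Finset (Fin m × Fin n)} :
    RigIndep m n a b U ↔
      StressFree ((genericLeft m n a b).map (algebraMap _ (RField m n a b)))
        ((genericRight m n a b).map (algebraMap _ (RField m n a b))) U := by
  rw [stressFree_iff_linearIndepOn, ← rigidityVectors_map _ _ (map_zero _),
    ← rigCol_eq_rigidityVectors_row]
  rfl

lemma exists_algHom_map_generic (x : Matrix (Fin m) (Fin a) ℚ) (y : Matrix (Fin n) (Fin b) ℚ) :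
    ∃ ψ : MvPolynomial (Fin m × Fin a ⊕ Fin n × Fin b) ℚ →ₐ[ℚ] ℚ,
      (genericLeft m n a b).map ψ = x ∧ (genericRight m n a b).map ψ = y := by
  refine ⟨MvPolynomial.aeval (Sum.elim (Function.uncurry x) (Function.uncurry y)), ?_, ?_⟩
  · ext p j
    simp [genericLeft, Function.uncurry]
  · ext q l
    simp [genericRight, Function.uncurry]

lemma rigIndep_of_stressFree {x : Matrix (Fin m) (Fin a) ℚ} {y : Matrix (Fin n) (Fin b) ℚ}
    {U : Finset (Fin m × Fin n)} (h : StressFree x y U) : RigIndep m n a b U := by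
  obtain ⟨ψ, rfl, rfl⟩ := exists_algHom_map_generic x y
  rw [stressFree_iff_linearIndepOn, ← rigidityVectors_map _ _ (map_zero ψ)] at h
  rw [rigIndep_iff_stressFree, stressFree_iff_linearIndepOn, ← rigidityVectors_map _ _ (map_zero _)]
  exact linearIndepOn_row_of_specialization ψ (IsFractionRing.injective _ _) _ h

lemma exists_generalPosition (m a : ℕ) : ∃ x : Matrix (Fin m) (Fin a) ℚ, GeneralPosition x :=
  ⟨_, generalPosition_rectVandermonde (Nat.cast_injective.comp Fin.val_injective) a⟩

lemma generalPosition_genericLeft :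
    GeneralPosition ((genericLeft m n a b).map (algebraMap _ (RField m n a b))) := by
  obtain ⟨x, hx⟩ := exists_generalPosition m a
  obtain ⟨ψ, rfl, -⟩ := exists_algHom_map_generic x (0 : Matrix (Fin n) (Fin b) ℚ)
  exact hx.of_specialization ψ (IsFractionRing.injective _ _)

end GenericPoint

section Laman

variable {m n a b : ℕ} {U V : Finset (Fin m × Fin n)}

lemma ViolatesLaman.mono (hUV : U ⊆ V) (h : ViolatesLaman m n a b U) : ViolatesLaman m n a b V := by
  obtain ⟨S, T, hS, hT, hcard⟩ := h
  refine ⟨S, T, hS, hT, hcard.trans_le ?_⟩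
  gcongr

lemma ViolatesLaman.of_transpose
    (h : ViolatesLaman n m b a (U.map (Equiv.prodComm _ _).toEmbedding)) :
    ViolatesLaman m n a b U := by
  obtain ⟨T, S, hT, hS, hcard⟩ := h
  refine ⟨S, T, hS, hT, ?_⟩
  have hswap : U.map (Equiv.prodComm _ _).toEmbedding ∩ T ×ˢ S =
      (U ∩ S ×ˢ T).map (Equiv.prodComm _ _).toEmbedding := by
    ext ⟨q, p⟩
    simp [and_comm]
  rw [hswap, Finset.card_map] at hcard
  linarith [mul_comm a b]

lemma card_le_of_product_subset (hU : ¬ ViolatesLaman m n a b U) {S : Finset (Fin m)}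
    {T : Finset (Fin n)} (hS : S.card = a + 1) (hST : S ×ˢ T ⊆ U) : T.card ≤ b := by
  by_contra! hT
  refine hU ⟨S, T, by omega, hT.le, ?_⟩
  rw [Finset.inter_eq_right.2 hST, Finset.card_product, hS]
  linarith

end Laman

section Columns

variable {P Q α β K : Type*} [Field K] [Fintype P]

/-- The neighbourhood in `U` of the vertex `q` of the second side. -/
def colNbhd (U : Finset (P × Q)) (q : Q) : Finset P :=
  Finset.univ.filter fun p ↦ (p, q) ∈ U

lemma mem_colNbhd {U : Finset (P × Q)} {p : P} {q : Q} : p ∈ colNbhd U q ↔ (p, q) ∈ U := by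
  simp [colNbhd]

lemma card_inter_product_eq_sum [DecidableEq P] [DecidableEq Q] {U : Finset (P × Q)} {S : Finset P}
    {T : Finset Q} (hS : ∀ q ∈ T, colNbhd U q ⊆ S) :
    (U ∩ S ×ˢ T).card = ∑ q ∈ T, (colNbhd U q).card := by
  rw [Finset.card_eq_sum_card_fiberwise (f := Prod.snd) (t := T) fun e he ↦ by simp_all]
  refine Finset.sum_congr rfl fun q hq ↦ ?_
  rw [← Finset.card_map (Function.Embedding.sectL P q)]
  congr 1
  ext ⟨p, q'⟩
  have hp : (p, q) ∈ U → p ∈ S := fun h ↦ hS q hq (mem_colNbhd.2 h)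
  simp only [Finset.mem_filter, Finset.mem_inter, Finset.mem_product, Finset.mem_map, mem_colNbhd,
    Function.Embedding.sectL_apply, Prod.mk.injEq]
  grind

variable [Fintype Q] [Fintype α] {x : Matrix P α K} {U : Finset (P × Q)}

lemma IsStress.col_eq_zero {y : Matrix Q β K} {W : Matrix P Q K} (hW : IsStress x y U W)
    (hx : GeneralPosition x) {q : Q} {s : Finset P} (hs : s.card ≤ Fintype.card α)
    (hWs : ∀ p ∉ s, W p q = 0) : Wᵀ q = 0 :=
  hx.eq_zero_of_vecMul_eq_zero hs hWs (hW.col_vecMul_eq_zero q)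

lemma IsStress.col_eq_zero_of_card_colNbhd_le {y : Matrix Q β K} {W : Matrix P Q K}
    (hW : IsStress x y U W) (hx : GeneralPosition x) {q : Q}
    (hq : (colNbhd U q).card ≤ Fintype.card α) : Wᵀ q = 0 :=
  hW.col_eq_zero hx hq fun p hp ↦ hW.support p q (mt mem_colNbhd.2 hp)

lemma stressFree_of_card_le [Fintype β] {y : Matrix Q β K} (hx : GeneralPosition x)
    (hy : GeneralPosition y)
    (hU : {q | Fintype.card α < (colNbhd U q).card}.ncard ≤ Fintype.card β) :
    StressFree x y U := by
  intro W hW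
  funext p
  rw [Set.ncard_eq_toFinset_card'] at hU
  refine hy.eq_zero_of_vecMul_eq_zero hU (fun q hq ↦ ?_) (hW.row_vecMul_eq_zero p)
  rw [Set.mem_toFinset, Set.mem_ofPred_eq, not_lt] at hq
  exact congrFun (hW.col_eq_zero_of_card_colNbhd_le hx hq) p

/-- If the `y q` are basis vectors or `0` according to the colour of `q`, then the stress condition
at `p` says that the weights of the edges at `p` sum to `0` on each colour class. In particular
`W p q = 0` when no other edge at `p` has the colour of `q`. -/
lemma stressFree_of_coloring [DecidableEq β] {c : Q → Option β} (hx : GeneralPosition x)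
    (hnone : ∀ q, c q = none → (colNbhd U q).card ≤ Fintype.card α)
    (hsome : ∀ q l, c q = some l →
      {p | (p, q) ∈ U ∧ ∃ q' ≠ q, c q' = some l ∧ (p, q') ∈ U}.ncard ≤ Fintype.card α) :
    StressFree x (of fun q l ↦ if c q = some l then 1 else 0) U := by
  intro W hW
  rw [← transpose_eq_zero]
  funext q
  rcases hc : c q with _ | l
  · exact hW.col_eq_zero_of_card_colNbhd_le hx (hnone q hc)
  have hcard := hsome q l hc
  rw [Set.ncard_eq_toFinset_card'] at hcard
  refine hW.col_eq_zero hx hcard fun p hp ↦ ?_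
  by_cases hpq : (p, q) ∈ U
  swap
  · exact hW.support p q hpq
  have hsum : ∑ q', W p q' * (if c q' = some l then 1 else 0) = 0 :=
    congrFun (hW.row_vecMul_eq_zero p) l
  rwa [Finset.sum_eq_single q, if_pos hc, mul_one] at hsum
  · intro q' _ hq'
    rw [mul_ite, mul_one, mul_zero, ite_eq_right_iff]
    exact fun hc' ↦ hW.support p q' fun hpq' ↦
      hp (Set.mem_toFinset.2 ⟨hpq, q', hq', hc', hpq'⟩)
  · simp

end Columns

section EasyCases

variable {m n a b : ℕ} {U : Finset (Fin m × Fin n)}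

lemma exists_stressFree_of_le_add_one (hm : m ≤ a + 1) (hU : ¬ ViolatesLaman m n a b U) :
    ∃ (x : Matrix (Fin m) (Fin a) ℚ) (y : Matrix (Fin n) (Fin b) ℚ), StressFree x y U := by
  obtain ⟨x, hx⟩ := exists_generalPosition m a
  obtain ⟨y, hy⟩ := exists_generalPosition n b
  refine ⟨x, y, stressFree_of_card_le hx hy ?_⟩
  simp only [Fintype.card_fin]
  rcases hm.lt_or_eq with hlt | rfl
  · have hempty : {q | a < (colNbhd U q).card} = ∅ := by
      ext q
      have := card_finset_fin_le (colNbhd U q)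
      simp only [Set.mem_ofPred_eq, Set.mem_empty_iff_false, iff_false]
      omega
    simp [hempty]
  · rw [Set.ncard_eq_toFinset_card']
    refine card_le_of_product_subset hU (S := Finset.univ) (by simp) fun ⟨p, q⟩ hpq ↦ ?_
    have hq : a < (colNbhd U q).card := by simpa using hpq
    have huniv : colNbhd U q = Finset.univ :=
      Finset.eq_univ_of_card _ (le_antisymm (Finset.card_le_univ _) (by rwa [Fintype.card_fin]))
    rw [← mem_colNbhd, huniv]
    exact Finset.mem_univ p

lemma exists_stressFree_of_right_eq_zero (hU : ¬ ViolatesLaman m n a 0 U) :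
    ∃ (x : Matrix (Fin m) (Fin a) ℚ) (y : Matrix (Fin n) (Fin 0) ℚ), StressFree x y U := by
  obtain ⟨x, hx⟩ := exists_generalPosition m a
  obtain ⟨y, hy⟩ := exists_generalPosition n 0
  refine ⟨x, y, stressFree_of_card_le hx hy ?_⟩
  have hempty : {q | a < (colNbhd U q).card} = ∅ := by
    ext q
    simp only [Set.mem_ofPred_eq, Set.mem_empty_iff_false, iff_false, not_lt]
    by_contra! hq
    obtain ⟨S, hSq, hS⟩ := Finset.exists_subset_card_eq hq
    refine absurd (card_le_of_product_subset hU (T := {q}) hS fun ⟨p, q'⟩ hpq ↦ ?_) (by simp)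
    obtain ⟨hp, rfl⟩ : p ∈ S ∧ q' = q := by simpa [eq_comm] using hpq
    exact mem_colNbhd.1 (hSq hp)
  simp [hempty]

end EasyCases

section TwoExtraRows

/-- Enumerate `τ` so that `f` is monotone and colour the enumeration cyclically: elements with
the same colour are then at least `B` places apart. -/
lemma exists_coloring_injOn_fibers {τ κ : Type*} [Fintype τ] [LinearOrder κ] (f : τ → κ) {r B : ℕ}
    (hcard : Fintype.card τ ≤ r * B) (hf : ∀ k, {t | f t = k}.ncard ≤ B) :
    ∃ c : τ → Fin B, (∀ k, {t | c t = k}.ncard ≤ r) ∧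
      ∀ s t, f s = f t → c s = c t → s = t := by
  obtain ⟨e, he⟩ : ∃ e : Fin (Fintype.card τ) ≃ τ, Monotone (f ∘ e) :=
    let e₀ := (Fintype.equivFin τ).symm
    ⟨(Tuple.sort (f ∘ e₀)).trans e₀, Tuple.monotone_sort (f ∘ e₀)⟩
  have hB (t : τ) : 0 < B := by
    rcases B.eq_zero_or_pos with rfl | hB
    · have := (e.symm t).pos
      omega
    · exact hB
  refine ⟨fun t ↦ ⟨e.symm t % B, Nat.mod_lt _ (hB t)⟩, fun k ↦ ?_, fun s t hst hc ↦ ?_⟩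
  · rw [← Finset.card_range r, ← Set.ncard_coe_finset]
    refine Set.ncard_le_ncard_of_injOn (fun t ↦ (e.symm t : ℕ) / B) (fun t _ ↦ ?_)
      (fun s hs t ht hst ↦ ?_)
    · rw [Finset.coe_range, Set.mem_Iio, Nat.div_lt_iff_lt_mul (hB t)]
      exact (e.symm t).2.trans_le hcard
    · have hmod : (e.symm s : ℕ) % B = e.symm t % B := Fin.val_eq_of_eq (hs.trans ht.symm)
      have hdiv : (e.symm s : ℕ) / B = e.symm t / B := hst
      have hval : (e.symm s : ℕ) = e.symm t := by
        rw [← Nat.div_add_mod (e.symm s) B, ← Nat.div_add_mod (e.symm t) B, hmod, hdiv]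
      exact e.symm.injective (Fin.ext hval)
  · by_contra hne
    wlog hlt : e.symm s < e.symm t generalizing s t
    · exact this t s hst.symm hc.symm (Ne.symm hne)
        ((not_lt.1 hlt).lt_of_ne fun h ↦ hne (e.symm.injective h).symm)
    have hgap : (e.symm s : ℕ) + B ≤ e.symm t :=
      Nat.ModEq.add_le_of_lt (Fin.val_eq_of_eq hc) hlt
    have hsub : (Finset.Icc (e.symm s) (e.symm t)).map e.toEmbedding ⊆
        Finset.univ.filter fun u ↦ f u = f t := by
      intro u hu
      obtain ⟨i, hi, rfl⟩ := Finset.mem_map.1 hu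
      rw [Finset.mem_Icc] at hi
      have hle : f (e i) ≤ f t := by simpa using he hi.2
      have hge : f s ≤ f (e i) := by simpa using he hi.1
      simpa using hle.antisymm (hst ▸ hge)
    have := (Finset.card_le_card hsub).trans (by simpa [Set.ncard_eq_toFinset_card'] using hf (f t))
    rw [Finset.card_map, Fin.card_Icc] at this
    omega

variable {a b n : ℕ} {U : Finset (Fin (a + 2) × Fin n)}

lemma card_add_two_mul_card_le (hU : ¬ ViolatesLaman (a + 2) n a b U) {F T : Finset (Fin n)}
    (hF : ∀ q ∈ F, (colNbhd U q).card = a + 2) (hT : ∀ q ∈ T, (colNbhd U q).card = a + 1) :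
    T.card + 2 * F.card ≤ 2 * b := by
  have hdisj : Disjoint F T := Finset.disjoint_left.2 fun q hqF hqT ↦ by
    have := hF q hqF
    have := hT q hqT
    omega
  by_contra! hlt
  refine hU ⟨Finset.univ, F ∪ T, by simp, ?_, ?_⟩
  · rw [Finset.card_union_of_disjoint hdisj]
    omega
  · rw [card_inter_product_eq_sum fun _ _ ↦ Finset.subset_univ _, Finset.sum_union hdisj,
      Finset.sum_congr rfl hF, Finset.sum_congr rfl hT, Finset.card_union_of_disjoint hdisj,
      Finset.sum_const, Finset.sum_const, Finset.card_fin, smul_eq_mul, smul_eq_mul]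
    linarith

lemma exists_missing {T : Finset (Fin n)} (hT : ∀ q ∈ T, (colNbhd U q).card = a + 1) :
    ∃ f : T → Fin (a + 2), ∀ t p, (p, t.1) ∈ U ↔ p ≠ f t := by
  have hmissing (t : T) : ∃ r, (colNbhd U t)ᶜ = {r} := by
    rw [← Finset.card_eq_one, Finset.card_compl, hT t t.2, Fintype.card_fin]
    omega
  choose f hf using hmissing
  refine ⟨f, fun t p ↦ ?_⟩
  rw [← mem_colNbhd, ← not_iff_not, ← Finset.mem_compl, hf, Finset.mem_singleton, not_not]

lemma ncard_fiber_add_card_le (hU : ¬ ViolatesLaman (a + 2) n a b U) {F T : Finset (Fin n)}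
    (hF : ∀ q ∈ F, colNbhd U q = Finset.univ) {f : T → Fin (a + 2)}
    (hf : ∀ t p, (p, t.1) ∈ U ↔ p ≠ f t) (r : Fin (a + 2)) :
    {t | f t = r}.ncard + F.card ≤ b := by
  rw [Set.ncard_eq_toFinset_card', ← Finset.card_map (Function.Embedding.subtype _),
    ← Finset.card_union_of_disjoint]
  · refine card_le_of_product_subset hU (S := Finset.univ.erase r) (by simp) fun ⟨p, q⟩ hpq ↦ ?_
    rw [Finset.mem_product, Finset.mem_union] at hpq
    rcases hpq with ⟨hp, hq | hq⟩
    · obtain ⟨t, ht, rfl⟩ := Finset.mem_map.1 hq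
      refine (hf t p).2 ?_
      simp_all
    · rw [← mem_colNbhd, hF q hq]
      exact Finset.mem_univ p
  · refine Finset.disjoint_left.2 fun q hq hqF ↦ ?_
    obtain ⟨t, -, rfl⟩ := Finset.mem_map.1 hq
    refine (hf t (f t)).1 (mem_colNbhd.1 ?_) rfl
    exact (hF _ hqF).symm ▸ Finset.mem_univ _

/-- Columns with one missing vertex are coloured so that a colour is shared by at most two of them,
whose missing vertices are different. -/
lemma exists_coloring_almost_full (hU : ¬ ViolatesLaman (a + 2) n a b U) {F T : Finset (Fin n)}
    (hF : ∀ q ∈ F, (colNbhd U q).card = a + 2) (hT : ∀ q ∈ T, (colNbhd U q).card = a + 1) :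
    ∃ c : T → Fin (b - F.card), ∀ s : T,
      {p | (p, s.1) ∈ U ∧ ∃ t, t ≠ s ∧ c t = c s ∧ (p, t.1) ∈ U}.ncard ≤ a := by
  obtain ⟨f, hf⟩ := exists_missing hT
  have hfull : ∀ q ∈ F, colNbhd U q = Finset.univ := fun q hq ↦
    (Finset.card_eq_iff_eq_univ _).1 ((hF q hq).trans (Fintype.card_fin _).symm)
  obtain ⟨c, hc, hinj⟩ := exists_coloring_injOn_fibers f (r := 2) (B := b - F.card)
    (by
      have := card_add_two_mul_card_le hU hF hT
      rw [Fintype.card_coe]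
      omega)
    fun r ↦ Nat.le_sub_of_add_le (ncard_fiber_add_card_le hU hfull hf r)
  refine ⟨c, fun s ↦ ?_⟩
  by_cases hs : ∃ t, t ≠ s ∧ c t = c s
  · obtain ⟨t, hts, hct⟩ := hs
    have hsub : {p | (p, s.1) ∈ U ∧ ∃ t', t' ≠ s ∧ c t' = c s ∧ (p, t'.1) ∈ U} ⊆
        ((Finset.univ.erase (f s)).erase (f t) : Set (Fin (a + 2))) := by
      rintro p ⟨hps, t', hts', hct', hpt'⟩
      obtain rfl : t' = t := by
        by_contra hne
        have := (Set.two_lt_ncard (Set.toFinite {u | c u = c s})).2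
          ⟨t', hct', t, hct, s, rfl, hne, hts', hts⟩
        have := hc (c s)
        omega
      simpa using ⟨(hf s p).1 hps, (hf _ p).1 hpt'⟩
    refine (Set.ncard_le_ncard hsub).trans ?_
    rw [Set.ncard_coe_finset, Finset.card_erase_of_mem, Finset.card_erase_of_mem,
      Finset.card_fin]
    · omega
    · exact Finset.mem_univ _
    · simpa using fun h ↦ hts (hinj t s h hct)
  · push Not at hs
    have hempty : {p | (p, s.1) ∈ U ∧ ∃ t, t ≠ s ∧ c t = c s ∧ (p, t.1) ∈ U} = ∅ :=
      Set.eq_empty_iff_forall_notMem.2 fun p ⟨_, t, hts, hct, _⟩ ↦ hs t hts hct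
    rw [hempty, Set.ncard_empty]
    exact a.zero_le

/-- A column joined to every vertex gets a colour of its own. -/
lemma exists_coloring_of_eq_add_two (hU : ¬ ViolatesLaman (a + 2) n a b U) :
    ∃ c : Fin n → Option (Fin b),
      (∀ q, c q = none → (colNbhd U q).card ≤ a) ∧
      ∀ q l, c q = some l →
        {p | (p, q) ∈ U ∧ ∃ q' ≠ q, c q' = some l ∧ (p, q') ∈ U}.ncard ≤ a := by
  obtain ⟨F, hF⟩ : ∃ F : Finset (Fin n), ∀ q, q ∈ F ↔ (colNbhd U q).card = a + 2 :=
    ⟨Finset.univ.filter fun q ↦ (colNbhd U q).card = a + 2, by simp⟩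
  obtain ⟨T, hT⟩ : ∃ T : Finset (Fin n), ∀ q, q ∈ T ↔ (colNbhd U q).card = a + 1 :=
    ⟨Finset.univ.filter fun q ↦ (colNbhd U q).card = a + 1, by simp⟩
  obtain ⟨c, hc⟩ := exists_coloring_almost_full hU (fun q ↦ (hF q).1) fun q ↦ (hT q).1
  have hb : F.card ≤ b := by
    have := card_add_two_mul_card_le hU (fun q ↦ (hF q).1) fun q ↦ (hT q).1
    omega
  obtain ⟨e⟩ : Nonempty (F ⊕ Fin (b - F.card) ≃ Fin b) := by
    rw [← Fintype.card_eq]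
    simp [hb]
  refine ⟨fun q ↦ if h : q ∈ F then some (e (.inl ⟨q, h⟩)) else
    if h : q ∈ T then some (e (.inr (c ⟨q, h⟩))) else none, fun q hq ↦ ?_, fun q l hq ↦ ?_⟩
  · have hle := card_finset_fin_le (colNbhd U q)
    have hqF : q ∉ F := fun h ↦ by simp [h] at hq
    have hqT : q ∉ T := fun h ↦ by simp [hqF, h] at hq
    rw [hF] at hqF
    rw [hT] at hqT
    omega
  rcases em (q ∈ F) with hqF | hqF
  · simp only [dif_pos hqF] at hq
    refine (Set.ncard_le_ncard (t := ∅) fun p ↦ ?_).trans (by simp)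
    rintro ⟨-, q', hne, hq', -⟩
    rw [← hq] at hq'
    beta_reduce at hq'
    split_ifs at hq'
    · exact absurd (by simpa using hq') hne
    · simp at hq'
  · have hqT : q ∈ T := by
      by_contra hqT
      simp [hqF, hqT] at hq
    simp only [dif_neg hqF, dif_pos hqT] at hq
    refine (Set.ncard_le_ncard fun p ↦ ?_).trans (hc ⟨q, hqT⟩)
    rintro ⟨hp, q', hne, hq', hp'⟩
    rw [← hq] at hq'
    beta_reduce at hq'
    split_ifs at hq' with hF' hT'
    · simp at hq'
    · exact ⟨hp, ⟨q', hT'⟩, by simpa using hne, by simpa using hq', hp'⟩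

lemma exists_stressFree_of_eq_add_two (hU : ¬ ViolatesLaman (a + 2) n a b U) :
    ∃ (x : Matrix (Fin (a + 2)) (Fin a) ℚ) (y : Matrix (Fin n) (Fin b) ℚ), StressFree x y U := by
  obtain ⟨x, hx⟩ := exists_generalPosition (a + 2) a
  obtain ⟨c, hnone, hsome⟩ := exists_coloring_of_eq_add_two hU
  exact ⟨x, _, stressFree_of_coloring hx (by simpa using hnone) (by simpa using hsome)⟩

end TwoExtraRows

section SupportedMatrices

variable {ρ P K : Type*} [Field K] [Infinite K] {supp : ρ → Finset P}

/-- Each minor is a nonzero polynomial in the entries of a matrix with the given support, because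
it equals `1` at the matrix of the partial permutation `f i`. -/
lemma exists_supported_matrix_det_ne_zero {κ : Type*} [Finite κ] [Fintype ρ] {J : κ → Finset ρ}
    {f : ∀ i, {j // j ∉ J i} → P} (hf : ∀ i, Function.Injective (f i))
    (hsupp : ∀ i (j : {j // j ∉ J i}), f i j ∈ supp j) :
    ∃ M : Matrix ρ P K, (∀ j, ∀ p ∉ supp j, M j p = 0) ∧
      ∀ i, (M.submatrix Subtype.val (f i)).det ≠ 0 := by
  cases nonempty_fintype κ
  set G : Matrix ρ P (MvPolynomial (ρ × P) K) :=
    of fun j p ↦ if p ∈ supp j then MvPolynomial.X (j, p) else 0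
  have hG (v : ρ × P → K) (j p) :
      G.map (MvPolynomial.eval v) j p = if p ∈ supp j then v (j, p) else 0 := by
    simp only [G, map_apply, of_apply]
    split_ifs <;> simp
  have hdet (v : ρ × P → K) (i) : MvPolynomial.eval v (G.submatrix Subtype.val (f i)).det =
      ((G.map (MvPolynomial.eval v)).submatrix Subtype.val (f i)).det := by
    rw [RingHom.map_det]
    rfl
  have hne (i) : (G.submatrix Subtype.val (f i)).det ≠ 0 := by
    intro h
    set v : ρ × P → K := fun e ↦ if ∃ h : e.1 ∉ J i, e.2 = f i ⟨e.1, h⟩ then 1 else 0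
    have hone : (G.map (MvPolynomial.eval v)).submatrix Subtype.val (f i) =
        (1 : Matrix {j // j ∉ J i} {j // j ∉ J i} K) := by
      ext j j'
      rw [submatrix_apply, hG, one_apply]
      by_cases hjj : j = j'
      · subst hjj
        simp [v, hsupp, j.2]
      · simp [v, hjj, j.2, (hf i).eq_iff, Ne.symm hjj]
    have hv := hdet v i
    rw [h, hone, map_zero, det_one] at hv
    exact zero_ne_one hv
  obtain ⟨v, hv⟩ : ∃ v, MvPolynomial.eval v (∏ i, (G.submatrix Subtype.val (f i)).det) ≠ 0 := by
    by_contra! h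
    exact Finset.prod_ne_zero_iff.2 (fun i _ ↦ hne i) (MvPolynomial.funext (by simpa using h))
  rw [map_prod, Finset.prod_ne_zero_iff] at hv
  exact ⟨G.map (MvPolynomial.eval v), fun j p hp ↦ by rw [hG, if_neg hp],
    fun i ↦ hdet v i ▸ hv i (Finset.mem_univ i)⟩

variable [DecidableEq P] {a : ℕ}

lemma exists_injective_mem_sdiff
    (hall : ∀ J : Finset ρ, J.Nonempty → J.card + a ≤ (J.biUnion supp).card)
    {J : Finset ρ} {Z : Finset P} (hJ : ∀ j ∈ J, supp j ⊆ Z) (hZ : Z.card ≤ J.card + a) :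
    ∃ f : {j // j ∉ J} → P, Function.Injective f ∧
      ∀ j : {j // j ∉ J}, f j ∈ supp j \ Z := by
  refine (Finset.all_card_le_biUnion_card_iff_exists_injective _).1 fun I ↦ ?_
  rcases I.eq_empty_or_nonempty with rfl | hne
  · simp
  set I' : Finset ρ := I.map (Function.Embedding.subtype _)
  have hdisj : Disjoint I' J := Finset.disjoint_left.2 fun j hj ↦ by
    obtain ⟨i, -, rfl⟩ := Finset.mem_map.1 hj
    exact i.2
  have hunion := hall (I' ∪ J) (.mono Finset.subset_union_left hne.map)
  rw [Finset.card_union_of_disjoint hdisj, Finset.card_map] at hunion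
  have hsub : (I' ∪ J).biUnion supp ⊆ (I.biUnion fun j ↦ supp j \ Z) ∪ Z := by
    intro p hp
    obtain ⟨j, hj, hp⟩ := Finset.mem_biUnion.1 hp
    rw [Finset.mem_union, or_iff_not_imp_right]
    intro hpZ
    rcases Finset.mem_union.1 hj with hj | hj
    · obtain ⟨i, hi, rfl⟩ := Finset.mem_map.1 hj
      exact Finset.mem_biUnion.2 ⟨i, hi, Finset.mem_sdiff.2 ⟨hp, hpZ⟩⟩
    · exact absurd (hJ j hj hp) hpZ
  have := (Finset.card_le_card hsub).trans (Finset.card_union_le _ _)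
  omega

/-- For `J = Z = ∅` the conclusion says that the rows of `M` are linearly independent. -/
lemma exists_supported_matrix [Fintype ρ] [Finite P]
    (hall : ∀ J : Finset ρ, J.Nonempty → J.card + a ≤ (J.biUnion supp).card) :
    ∃ M : Matrix ρ P K, ∀ (J : Finset ρ) (Z : Finset P), (∀ j ∈ J, supp j ⊆ Z) →
      Z.card ≤ J.card + a → ∀ c, (∀ p ∉ Z, (c ᵥ* M) p = 0) → ∀ j ∉ J, c j = 0 := by
  cases nonempty_fintype P
  have hf (i : {i : Finset ρ × Finset P // (∀ j ∈ i.1, supp j ⊆ i.2) ∧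
      i.2.card ≤ i.1.card + a}) := exists_injective_mem_sdiff hall i.2.1 i.2.2
  choose f hinj hmem using hf
  simp only [Finset.mem_sdiff] at hmem
  obtain ⟨M, hM, hdet⟩ := exists_supported_matrix_det_ne_zero (K := K) hinj fun i j ↦ (hmem i j).1
  refine ⟨M, fun J Z hJ hZ c hc j hj ↦ ?_⟩
  set i : {i : Finset ρ × Finset P // (∀ j ∈ i.1, supp j ⊆ i.2) ∧ i.2.card ≤ i.1.card + a} :=
    ⟨(J, Z), hJ, hZ⟩
  have hzero : (fun j : {j // j ∉ J} ↦ c j) ᵥ* M.submatrix Subtype.val (f i) = 0 := by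
    funext k
    rw [Pi.zero_apply, ← hc (f i k) (hmem i k).2]
    simp only [vecMul, dotProduct, submatrix_apply]
    rw [← Finset.sum_subtype (Finset.univ.filter fun j ↦ j ∉ J) (by simp)
      fun j ↦ c j * M j (f i k)]
    refine Finset.sum_subset (Finset.filter_subset _ _) fun j _ hj ↦ ?_
    have hjJ : j ∈ J := by simpa using hj
    rw [hM j _ fun h ↦ (hmem i k).2 (hJ j hjJ h), mul_zero]
  exact congrFun (eq_zero_of_vecMul_eq_zero (hdet i) hzero) ⟨j, hj⟩

lemma card_add_le_card_biUnion_sigma {ι : Type*} {r : ι → ℕ} {N : ι → Finset P}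
    (h : ∀ I : Finset ι, I.Nonempty → (∀ i ∈ I, 0 < r i) →
      ∑ i ∈ I, r i + a ≤ (I.biUnion N).card)
    {J : Finset (Σ i, Fin (r i))} (hJ : J.Nonempty) :
    J.card + a ≤ (J.biUnion fun j ↦ N j.1).card := by
  have hsub : J ⊆ (J.image Sigma.fst).sigma fun _ ↦ Finset.univ := fun j hj ↦
    Finset.mem_sigma.2 ⟨Finset.mem_image_of_mem _ hj, Finset.mem_univ _⟩
  have hcard := Finset.card_le_card hsub
  rw [Finset.card_sigma] at hcard
  simp only [Finset.card_fin] at hcard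
  have hI := h (J.image Sigma.fst) (hJ.image _) fun i hi ↦ by
    obtain ⟨j, -, rfl⟩ := Finset.mem_image.1 hi
    exact j.2.pos
  rw [Finset.image_biUnion] at hI
  omega

end SupportedMatrices

section OneRightCoordinate

variable {P Q α β ρ K : Type*} [Field K] [Fintype P]

lemma exists_matrix_vecMul_eq_zero_imp_mem [Fintype α] {V : Submodule K (P → K)}
    (hV : Module.finrank K V + Fintype.card α = Fintype.card P) :
    ∃ x : Matrix P α K, ∀ w, w ᵥ* x = 0 → w ∈ V := by
  have hrank : Module.finrank K ((P → K) ⧸ V) = Module.finrank K (α → K) := by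
    have := Submodule.finrank_quotient_add_finrank V
    rw [Module.finrank_fintype_fun_eq_card] at this ⊢
    omega
  set e := LinearEquiv.ofFinrankEq _ _ hrank
  refine ⟨(LinearMap.toMatrix' (e.toLinearMap ∘ₗ V.mkQ))ᵀ, fun w hw ↦ ?_⟩
  rw [vecMul_transpose, LinearMap.toMatrix'_mulVec] at hw
  simpa using hw

/-- The column `q` of a stress is a combination of the rows of `M` with indices in `J q`. All
columns sum to `0` and the sets `J q` are disjoint, so every column vanishes. -/
lemma stressFree_of_disjoint [Fintype Q] [Fintype ρ] [Nonempty β] {x : Matrix P α K}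
    {U : Finset (P × Q)} {M : Matrix ρ P K} (hx : ∀ w, w ᵥ* x = 0 → ∃ c, c ᵥ* M = w)
    (hM : ∀ c, c ᵥ* M = 0 → c = 0) {J : Q → Finset ρ} (hdisj : Pairwise (Function.onFun Disjoint J))
    (hJ : ∀ q c, (∀ p ∉ colNbhd U q, (c ᵥ* M) p = 0) → ∀ j ∉ J q, c j = 0) :
    StressFree x (of fun _ _ ↦ 1 : Matrix Q β K) U := by
  intro W hW
  choose c hc using fun q ↦ hx (Wᵀ q) (hW.col_vecMul_eq_zero q)
  have hcJ (q) : ∀ j ∉ J q, c q j = 0 :=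
    hJ q (c q) fun p hp ↦ hc q ▸ hW.support p q (mt mem_colNbhd.2 hp)
  have hsum : ∑ q, c q = 0 := by
    refine hM _ (funext fun p ↦ ?_)
    have hp : ∑ q, W p q * 1 = 0 := congrFun (hW.row_vecMul_eq_zero p) (Classical.arbitrary β)
    rw [Matrix.sum_vecMul, Finset.sum_apply]
    simpa [hc] using hp
  rw [← transpose_eq_zero]
  funext q
  suffices hcq : c q = 0 by rw [← hc, hcq, zero_vecMul]; rfl
  funext j
  by_cases hj : j ∈ J q
  · have hqj := congrFun hsum j
    rwa [Finset.sum_apply, Finset.sum_eq_single q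
      (fun q' _ hne ↦ hcJ q' j (Finset.disjoint_right.1 (hdisj hne) hj)) (by simp)] at hqj
  · exact hcJ q j hj

variable {m n a : ℕ} {U : Finset (Fin m × Fin n)}

lemma sum_card_colNbhd_sub_add_le (hU : ¬ ViolatesLaman m n a 1 U) {T : Finset (Fin n)}
    (hT : T.Nonempty) (haT : ∀ q ∈ T, a ≤ (colNbhd U q).card) :
    ∑ q ∈ T, ((colNbhd U q).card - a) + a ≤ (T.biUnion (colNbhd U)).card := by
  have hN : ∀ q ∈ T, colNbhd U q ⊆ T.biUnion (colNbhd U) :=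
    fun q hq ↦ Finset.subset_biUnion_of_mem _ hq
  by_contra! hlt
  refine hU ⟨T.biUnion (colNbhd U), T, ?_, hT.card_pos, ?_⟩
  · obtain ⟨q, hq⟩ := hT
    exact (haT q hq).trans (Finset.card_le_card (hN q hq))
  · rw [card_inter_product_eq_sum hN,
      ← Finset.sum_congr rfl fun q hq ↦ Nat.sub_add_cancel (haT q hq),
      Finset.sum_add_distrib, Finset.sum_const, smul_eq_mul]
    omega

lemma sum_univ_card_colNbhd_sub_add_le (ha : a ≤ m) (hU : ¬ ViolatesLaman m n a 1 U) :
    ∑ q, ((colNbhd U q).card - a) + a ≤ m := by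
  rw [← Finset.sum_filter_ne_zero]
  set T := Finset.univ.filter fun q ↦ (colNbhd U q).card - a ≠ 0
  rcases T.eq_empty_or_nonempty with hempty | hne
  · simpa [hempty] using ha
  · refine (sum_card_colNbhd_sub_add_le hU hne fun q hq ↦ ?_).trans (card_finset_fin_le _)
    have := (Finset.mem_filter.1 hq).2
    omega

/-- The rank `m - a` is distributed over the columns, `#(colNbhd U q) - a` to the column `q`, and
the remaining rank to a dummy column joined to every vertex. -/
lemma exists_rank_distribution (ha : a ≤ m) (hU : ¬ ViolatesLaman m n a 1 U) :
    ∃ (r : Option (Fin n) → ℕ) (N : Option (Fin n) → Finset (Fin m)),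
      (∀ q, r (some q) = (colNbhd U q).card - a) ∧ (∀ q, N (some q) = colNbhd U q) ∧
      ∑ i, r i + a = m ∧
      ∀ I : Finset (Option (Fin n)), I.Nonempty → (∀ i ∈ I, 0 < r i) →
        ∑ i ∈ I, r i + a ≤ (I.biUnion N).card := by
  have htotal := sum_univ_card_colNbhd_sub_add_le ha hU
  set r : Option (Fin n) → ℕ := fun i ↦
    i.elim (m - a - ∑ q, ((colNbhd U q).card - a)) fun q ↦ (colNbhd U q).card - a
  have hr : ∑ i, r i + a = m := by
    rw [Fintype.sum_option]
    simp only [r, Option.elim_none, Option.elim_some]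
    omega
  refine ⟨r, fun i ↦ i.elim Finset.univ (colNbhd U), fun _ ↦ rfl, fun _ ↦ rfl, hr,
    fun I hI hpos ↦ ?_⟩
  by_cases hnone : none ∈ I
  · have huniv : I.biUnion (fun i ↦ i.elim Finset.univ (colNbhd U)) = Finset.univ :=
      Finset.eq_univ_of_forall fun p ↦ Finset.mem_biUnion.2 ⟨none, hnone, Finset.mem_univ p⟩
    have := Finset.sum_le_univ_sum_of_nonneg (s := I) fun i ↦ (r i).zero_le
    rw [huniv, Finset.card_fin]
    omega
  · obtain ⟨T, rfl⟩ : ∃ T : Finset (Fin n), T.map .some = I :=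
      ⟨I.eraseNone, by rw [Finset.map_some_eraseNone, Finset.erase_eq_of_notMem hnone]⟩
    rw [Finset.sum_map, Finset.map_eq_image, Finset.image_biUnion]
    refine sum_card_colNbhd_sub_add_le hU (by simpa using hI) fun q hq ↦ ?_
    have : 0 < (colNbhd U q).card - a := hpos (some q) (Finset.mem_map_of_mem _ hq)
    omega

lemma exists_stressFree_of_right_eq_one (ha : a ≤ m) (hU : ¬ ViolatesLaman m n a 1 U) :
    ∃ (x : Matrix (Fin m) (Fin a) ℚ) (y : Matrix (Fin n) (Fin 1) ℚ), StressFree x y U := by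
  obtain ⟨r, N, hr, hN, htotal, hrank⟩ := exists_rank_distribution ha hU
  obtain ⟨M, hM⟩ := exists_supported_matrix (K := ℚ) (supp := fun j : Σ i, Fin (r i) ↦ N j.1)
    fun J hJ ↦ card_add_le_card_biUnion_sigma hrank hJ
  have hinj : ∀ c, c ᵥ* M = 0 → c = 0 := fun c hc ↦
    funext fun j ↦ hM ∅ ∅ (by simp) (by simp) c (fun p _ ↦ congrFun hc p) j (by simp)
  obtain ⟨x, hx⟩ := exists_matrix_vecMul_eq_zero_imp_mem (α := Fin a)
    (V := LinearMap.range M.vecMulLinear) (by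
      rw [LinearMap.finrank_range_of_inj ((injective_iff_map_eq_zero _).2 hinj)]
      simpa using htotal)
  refine ⟨x, _, stressFree_of_disjoint (M := M) hx hinj
    (J := fun q ↦ Finset.univ.map (Function.Embedding.sigmaMk (some q))) ?_ fun q c hc ↦ ?_⟩
  · intro q q' hne
    rw [Function.onFun, Finset.disjoint_left]
    rintro j hj hj'
    obtain ⟨k, -, rfl⟩ := Finset.mem_map.1 hj
    obtain ⟨k', -, hk⟩ := Finset.mem_map.1 hj'
    exact hne (Option.some_injective _ (congrArg Sigma.fst hk).symm)
  · refine hM _ (colNbhd U q) (fun j hj ↦ ?_) ?_ c hc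
    · obtain ⟨k, -, rfl⟩ := Finset.mem_map.1 hj
      exact (hN q).le
    · rw [Finset.card_map, Finset.card_fin, hr]
      omega

end OneRightCoordinate

section Counterexample

lemma eq_zero_of_smul_vecMulVec_add_smul_vecMulVec {P Q K : Type*} [Field K] {f f' : P → K}
    {g g' : Q → K} {c d : K} (hf : LinearIndependent K ![f, f']) (hg : g ≠ 0) (hg' : g' ≠ 0)
    (h : c • vecMulVec f g + d • vecMulVec f' g' = 0) : c = 0 ∧ d = 0 := by
  have hcoeff (q : Q) : c * g q = 0 ∧ d * g' q = 0 := by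
    refine LinearIndependent.pair_iff.1 hf _ _ (funext fun p ↦ ?_)
    have hpq : c * (f p * g q) + d * (f' p * g' q) = 0 := congrFun₂ h p q
    simp only [Pi.add_apply, Pi.smul_apply, Pi.zero_apply, smul_eq_mul]
    linear_combination hpq
  obtain ⟨q, hq⟩ := Function.ne_iff.1 hg
  obtain ⟨q', hq'⟩ := Function.ne_iff.1 hg'
  exact ⟨(mul_eq_zero.1 (hcoeff q).1).resolve_right hq,
    (mul_eq_zero.1 (hcoeff q').2).resolve_right hq'⟩

/-- In terms of `D = 5 - ∑ i, s i` and `E = 5 - ∑ i, t i` this reduces to `D * E ≤ D + E`, which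
holds because `D, E ≤ 2`. -/
lemma mul_le_sum_mul_of_add_two_le_sum {s t : Fin 3 → ℕ} (hs : ∀ i, s i ≤ ![2, 2, 1] i)
    (ht : ∀ i, t i ≤ ![2, 2, 1] i) {i j : ℕ} (hi : 0 < i) (hj : 0 < j)
    (his : i + 2 ≤ ∑ r, s r) (hjt : j + 2 ≤ ∑ r, t r) : i * j ≤ ∑ r, s r * t r := by
  have hs₀ : s 0 ≤ 2 := hs 0
  have hs₁ : s 1 ≤ 2 := hs 1
  have hs₂ : s 2 ≤ 1 := hs 2
  have ht₀ : t 0 ≤ 2 := ht 0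
  have ht₁ : t 1 ≤ 2 := ht 1
  have ht₂ : t 2 ≤ 1 := ht 2
  rw [Fin.sum_univ_three] at *
  have hij : i * j ≤ (s 0 + s 1 + s 2 - 2) * (t 0 + t 1 + t 2 - 2) :=
    Nat.mul_le_mul (by omega) (by omega)
  refine hij.trans ?_
  zify [show 2 ≤ s 0 + s 1 + s 2 by omega, show 2 ≤ t 0 + t 1 + t 2 by omega] at *
  have hS : (3 : ℤ) ≤ s 0 + s 1 + s 2 := by omega
  have hT : (3 : ℤ) ≤ t 0 + t 1 + t 2 := by omega
  have hDE : (5 - (s 0 + s 1 + s 2 : ℤ)) * (5 - (t 0 + t 1 + t 2)) ≤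
      (5 - (s 0 + s 1 + s 2)) + (5 - (t 0 + t 1 + t 2)) := by
    nlinarith [mul_nonneg (show (0 : ℤ) ≤ 5 - (s 0 + s 1 + s 2) by omega) (sub_nonneg.2 hT),
      mul_nonneg (show (0 : ℤ) ≤ 5 - (t 0 + t 1 + t 2) by omega) (sub_nonneg.2 hS)]
  nlinarith [mul_nonneg (sub_nonneg.2 hs₀) (sub_nonneg.2 ht₀),
    mul_nonneg (sub_nonneg.2 hs₁) (sub_nonneg.2 ht₁),
    mul_nonneg (sub_nonneg.2 hs₂) (sub_nonneg.2 ht₂)]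

/-- `k + 3` elements of `ι` containing disjoint blocks of sizes `2`, `2` and `1`. -/
structure BlockSystem (ι : Type*) (k : ℕ) where
  ground : Finset ι
  block : Fin 3 → Finset ι
  card_ground : ground.card = k + 3
  card_block : ∀ i, (block i).card = ![2, 2, 1] i
  block_subset_ground : ∀ i, block i ⊆ ground
  pairwise_disjoint : Pairwise (Function.onFun Disjoint block)

namespace BlockSystem

lemma exists_of_add_three_le {ι : Type*} [Fintype ι] {k : ℕ} (hk : 2 ≤ k)
    (hι : k + 3 ≤ Fintype.card ι) : Nonempty (BlockSystem ι k) := by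
  obtain ⟨f⟩ : Nonempty (Fin (k + 3) ↪ ι) :=
    Function.Embedding.nonempty_of_card_le (by rwa [Fintype.card_fin])
  let g : Fin 5 ↪ ι := (Fin.castLEEmb (by omega)).trans f
  let B : Fin 3 → Finset (Fin 5) := ![{0, 1}, {2, 3}, {4}]
  refine ⟨⟨Finset.univ.map f, fun i ↦ (B i).map g, by simp, fun i ↦ ?_, fun i ↦ ?_, ?_⟩⟩
  · rw [Finset.card_map]
    fin_cases i <;> rfl
  · rw [← Finset.map_map]
    exact Finset.map_subset_map.2 (Finset.subset_univ _)
  · intro i j hij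
    refine (Finset.disjoint_map g).2 ?_
    fin_cases i <;> fin_cases j <;> first | exact absurd rfl hij | decide

variable {P Q : Type*} {k l : ℕ}

/-- The complete bipartite graph on the two ground sets with a hole for each pair of corresponding
blocks. -/
def holedGraph (X : BlockSystem P k) (Y : BlockSystem Q l) : Finset (P × Q) :=
  (X.ground ×ˢ Y.ground).filter fun e ↦ ∀ i, ¬ (e.1 ∈ X.block i ∧ e.2 ∈ Y.block i)

lemma mem_holedGraph {X : BlockSystem P k} {Y : BlockSystem Q l} {e : P × Q} :
    e ∈ X.holedGraph Y ↔ (e.1 ∈ X.ground ∧ e.2 ∈ Y.ground) ∧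
      ∀ i, ¬ (e.1 ∈ X.block i ∧ e.2 ∈ Y.block i) := by
  rw [holedGraph, Finset.mem_filter, Finset.mem_product]

section Stress

variable {α β K : Type*} [Field K] [Fintype P] [Fintype Q]

/-- Off the third block, both `f 0 ⊗ g 1` and `f 1 ⊗ g 0` vanish on the holes. -/
lemma isStress_holedGraph (X : BlockSystem P k) (Y : BlockSystem Q l) {x : Matrix P α K}
    {y : Matrix Q β K} {f : Fin 2 → P → K} {g : Fin 2 → Q → K} {c d : K}
    (hfg : ∀ i, ∀ p ∉ X.ground, f i p = 0) (hgg : ∀ i, ∀ q ∉ Y.ground, g i q = 0)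
    (hfb : ∀ i, ∀ p ∈ X.block i.castSucc, f i p = 0)
    (hgb : ∀ i, ∀ q ∈ Y.block i.castSucc, g i q = 0)
    (hfx : ∀ i, f i ᵥ* x = 0) (hgy : ∀ i, g i ᵥ* y = 0)
    (hlast : ∀ p ∈ X.block 2, ∀ q ∈ Y.block 2, c * (f 0 p * g 1 q) + d * (f 1 p * g 0 q) = 0) :
    IsStress x y (X.holedGraph Y) (c • vecMulVec (f 0) (g 1) + d • vecMulVec (f 1) (g 0)) where
  support p q hpq := by
    simp only [Matrix.add_apply, Matrix.smul_apply, vecMulVec_apply, smul_eq_mul]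
    by_cases hp : p ∈ X.ground
    swap
    · simp [hfg _ p hp]
    by_cases hq : q ∈ Y.ground
    swap
    · simp [hgg _ q hq]
    obtain ⟨i, hpi, hqi⟩ : ∃ i, p ∈ X.block i ∧ q ∈ Y.block i := by
      simpa [mem_holedGraph, hp, hq] using hpq
    fin_cases i
    · simp [hfb 0 p hpi, hgb 0 q hqi]
    · simp [hfb 1 p hpi, hgb 1 q hqi]
    · exact hlast p hpi q hqi
  left := by
    ext
    simp [transpose_vecMulVec, Matrix.add_mul, vecMulVec_mul, hfx, vecMulVec_apply]
  right := by
    ext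
    simp [Matrix.add_mul, vecMulVec_mul, hgy, vecMulVec_apply]

variable [Fintype α] [Fintype β]

lemma exists_vecMul_eq_zero (X : BlockSystem P k) {x : Matrix P α K} (hα : Fintype.card α = k)
    (i : Fin 3) :
    ∃ f : P → K, f ≠ 0 ∧ (∀ p ∉ X.ground, f p = 0) ∧ (∀ p ∈ X.block i, f p = 0) ∧
      f ᵥ* x = 0 := by
  have hblock : (X.block i).card ≤ 2 := by
    rw [X.card_block]
    fin_cases i <;> simp
  have hcard : Fintype.card α < (X.ground \ X.block i).card := by
    rw [Finset.card_sdiff_of_subset (X.block_subset_ground i), X.card_ground]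
    omega
  obtain ⟨f, hf, hsupp, hfx⟩ := exists_vecMul_eq_zero_of_card_lt x hcard
  exact ⟨f, hf, fun p hp ↦ hsupp p (by simp [hp]), fun p hp ↦ hsupp p (by simp [hp]), hfx⟩

lemma eq_zero_of_vecMul_eq_zero (X : BlockSystem P k) {x : Matrix P α K} (hx : GeneralPosition x)
    (hα : Fintype.card α = k) {f : P → K} (hground : ∀ p ∉ X.ground, f p = 0)
    (hblock₀ : ∀ p ∈ X.block 0, f p = 0) (hblock₁ : ∀ p ∈ X.block 1, f p = 0)
    (hfx : f ᵥ* x = 0) : f = 0 := by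
  refine hx.eq_zero_of_vecMul_eq_zero (s := X.ground \ (X.block 0 ∪ X.block 1)) ?_ ?_ hfx
  · rw [Finset.card_sdiff_of_subset
        (Finset.union_subset (X.block_subset_ground 0) (X.block_subset_ground 1)),
      Finset.card_union_of_disjoint (X.pairwise_disjoint (by decide)), X.card_ground,
      X.card_block, X.card_block, hα]
    simp
  · intro p hp
    by_cases hg : p ∈ X.ground
    · have hp' : p ∈ X.block 0 ∨ p ∈ X.block 1 := by simpa [hg, or_iff_not_imp_left] using hp
      exact hp'.elim (hblock₀ p) (hblock₁ p)
    · exact hground p hg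

lemma linearIndependent_pair (X : BlockSystem P k) {x : Matrix P α K} (hx : GeneralPosition x)
    (hα : Fintype.card α = k) {f : Fin 2 → P → K} (hf : ∀ i, f i ≠ 0)
    (hground : ∀ i, ∀ p ∉ X.ground, f i p = 0)
    (hblock : ∀ i, ∀ p ∈ X.block i.castSucc, f i p = 0) (hfx : ∀ i, f i ᵥ* x = 0) :
    LinearIndependent K ![f 0, f 1] := by
  rw [LinearIndependent.pair_iff]
  intro s t hst
  have hs : s • f 0 = 0 := by
    refine X.eq_zero_of_vecMul_eq_zero hx hα (fun p hp ↦ ?_) (fun p hp ↦ ?_) (fun p hp ↦ ?_) ?_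
    · simp [hground 0 p hp]
    · simp [hblock 0 p hp]
    · simpa [hblock 1 p hp] using congrFun hst p
    · rw [smul_vecMul, hfx, smul_zero]
  have ht : t • f 1 = 0 := by simpa [hs] using hst
  exact ⟨(smul_eq_zero.1 hs).resolve_right (hf 0), (smul_eq_zero.1 ht).resolve_right (hf 1)⟩

lemma not_stressFree_holedGraph (X : BlockSystem P k) (Y : BlockSystem Q l) {x : Matrix P α K}
    {y : Matrix Q β K} (hx : GeneralPosition x) (hα : Fintype.card α = k)
    (hβ : Fintype.card β = l) : ¬ StressFree x y (X.holedGraph Y) := by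
  choose f hf hfg hfb hfx using fun i : Fin 2 ↦ X.exists_vecMul_eq_zero (x := x) hα i.castSucc
  choose g hg hgg hgb hgy using fun i : Fin 2 ↦ Y.exists_vecMul_eq_zero (x := y) hβ i.castSucc
  obtain ⟨p₂, hp₂⟩ := Finset.card_eq_one.1 (X.card_block 2)
  obtain ⟨q₂, hq₂⟩ := Finset.card_eq_one.1 (Y.card_block 2)
  obtain ⟨c, d, hcd, hzero⟩ : ∃ c d : K, (c ≠ 0 ∨ d ≠ 0) ∧
      c * (f 0 p₂ * g 1 q₂) + d * (f 1 p₂ * g 0 q₂) = 0 := by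
    by_cases h : f 0 p₂ * g 1 q₂ = 0
    · exact ⟨1, 0, .inl one_ne_zero, by rw [h]; ring⟩
    · exact ⟨-(f 1 p₂ * g 0 q₂), f 0 p₂ * g 1 q₂, .inr h, by ring⟩
  intro hfree
  obtain ⟨hc, hd⟩ := eq_zero_of_smul_vecMulVec_add_smul_vecMulVec
    (X.linearIndependent_pair hx hα hf hfg hfb hfx) (hg 1) (hg 0)
    (hfree _ (X.isStress_holedGraph Y hfg hgg hfb hgb hfx hgy (by simpa [hp₂, hq₂] using hzero)))
  exact hcd.elim (· hc) (· hd)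

end Stress

lemma card_le_sum_card_inter_block [DecidableEq P] (X : BlockSystem P k) (hk : 2 ≤ k)
    {S : Finset P} (hS : S ⊆ X.ground) : S.card + 2 ≤ k + ∑ i, (S ∩ X.block i).card := by
  have hblocks : (Finset.univ.biUnion X.block).card = 5 := by
    rw [Finset.card_biUnion (X.pairwise_disjoint.set_pairwise _)]
    simp [X.card_block, Fin.sum_univ_three]
  have hrest : (X.ground \ Finset.univ.biUnion X.block).card = k + 3 - 5 := by
    rw [Finset.card_sdiff_of_subset
      (Finset.biUnion_subset.2 fun i _ ↦ X.block_subset_ground i), X.card_ground, hblocks]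
  have hcover : S ⊆ (X.ground \ Finset.univ.biUnion X.block) ∪
      Finset.univ.biUnion fun i ↦ S ∩ X.block i := by
    intro p hp
    by_cases h : ∃ i, p ∈ X.block i <;> simp_all [hS hp]
  calc S.card + 2 ≤ (k + 3 - 5 + ∑ i, (S ∩ X.block i).card) + 2 := by
        gcongr
        exact (Finset.card_le_card hcover).trans <| (Finset.card_union_le _ _).trans <|
          add_le_add hrest.le Finset.card_biUnion_le
    _ = k + ∑ i, (S ∩ X.block i).card := by omega

lemma card_holedGraph_inter_add_le [DecidableEq P] [DecidableEq Q] (X : BlockSystem P k)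
    (Y : BlockSystem Q l) (S : Finset P) (T : Finset Q) :
    (X.holedGraph Y ∩ S ×ˢ T).card +
        ∑ i, (S ∩ X.ground ∩ X.block i).card * (T ∩ Y.ground ∩ Y.block i).card ≤
      (S ∩ X.ground).card * (T ∩ Y.ground).card := by
  let holes (i : Fin 3) : Finset (P × Q) :=
    (S ∩ X.ground ∩ X.block i) ×ˢ (T ∩ Y.ground ∩ Y.block i)
  have hholes : (Finset.univ.biUnion holes).card =
      ∑ i, (S ∩ X.ground ∩ X.block i).card * (T ∩ Y.ground ∩ Y.block i).card := by
    rw [Finset.card_biUnion]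
    · simp only [holes, Finset.card_product]
    · intro i _ j _ hij
      exact Finset.disjoint_product.2 <| .inl <|
        (X.pairwise_disjoint hij).mono Finset.inter_subset_right Finset.inter_subset_right
  have hdisj : Disjoint (X.holedGraph Y ∩ S ×ˢ T) (Finset.univ.biUnion holes) := by
    rw [Finset.disjoint_left]
    intro e he he'
    obtain ⟨i, -, hi⟩ := Finset.mem_biUnion.1 he'
    simp only [holes, Finset.mem_product, Finset.mem_inter] at hi
    exact (mem_holedGraph.1 (Finset.mem_inter.1 he).1).2 i ⟨hi.1.2, hi.2.2⟩
  rw [← hholes, ← Finset.card_union_of_disjoint hdisj, ← Finset.card_product]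
  refine Finset.card_le_card (Finset.union_subset ?_ (Finset.biUnion_subset.2 fun i _ ↦ ?_))
  · intro e he
    simp only [Finset.mem_inter, mem_holedGraph, Finset.mem_product] at he ⊢
    exact ⟨⟨he.2.1, he.1.1.1⟩, he.2.2, he.1.1.2⟩
  · exact Finset.product_subset_product Finset.inter_subset_left Finset.inter_subset_left

end BlockSystem

lemma not_violatesLaman_holedGraph {m n a b : ℕ} (ha : 2 ≤ a) (hb : 2 ≤ b)
    (X : BlockSystem (Fin m) a) (Y : BlockSystem (Fin n) b) :
    ¬ ViolatesLaman m n a b (X.holedGraph Y) := by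
  rintro ⟨S, T, hS, hT, hviol⟩
  have hcard := X.card_holedGraph_inter_add_le Y S T
  have hinter := (Nat.le_add_right _ _).trans hcard
  have hSle : (S ∩ X.ground).card ≤ S.card := Finset.card_le_card Finset.inter_subset_left
  have hTle : (T ∩ Y.ground).card ≤ T.card := Finset.card_le_card Finset.inter_subset_left
  have hSblock := X.card_le_sum_card_inter_block ha (S := S ∩ X.ground) Finset.inter_subset_right
  have hTblock := Y.card_le_sum_card_inter_block hb (S := T ∩ Y.ground) Finset.inter_subset_right
  rcases le_or_gt (S ∩ X.ground).card a with hSa | hSa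
  · nlinarith [hinter, Nat.mul_le_mul hSa hTle, Nat.mul_le_mul_right b hS]
  rcases le_or_gt (T ∩ Y.ground).card b with hTb | hTb
  · nlinarith [hinter, Nat.mul_le_mul hSle hTb, Nat.mul_le_mul_left a hT]
  obtain ⟨i, hi⟩ := Nat.exists_eq_add_of_lt hSa
  obtain ⟨j, hj⟩ := Nat.exists_eq_add_of_lt hTb
  have hholes : (i + 1) * (j + 1) ≤
      ∑ r, (S ∩ X.ground ∩ X.block r).card * (T ∩ Y.ground ∩ Y.block r).card := by
    refine mul_le_sum_mul_of_add_two_le_sum (fun r ↦ ?_) (fun r ↦ ?_) i.succ_pos j.succ_pos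
      (by omega) (by omega)
    · exact (Finset.card_le_card Finset.inter_subset_right).trans_eq (X.card_block r)
    · exact (Finset.card_le_card Finset.inter_subset_right).trans_eq (Y.card_block r)
  nlinarith [Nat.mul_le_mul_right b hSle, Nat.mul_le_mul_right a hTle]

lemma exists_not_rigIndep_and_not_violatesLaman {m n a b : ℕ} (ha : 2 ≤ a) (hb : 2 ≤ b)
    (hm : a + 3 ≤ m) (hn : b + 3 ≤ n) :
    ∃ U : Finset (Fin m × Fin n), ¬ RigIndep m n a b U ∧ ¬ ViolatesLaman m n a b U := by
  obtain ⟨X⟩ := BlockSystem.exists_of_add_three_le (ι := Fin m) ha (by simpa using hm)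
  obtain ⟨Y⟩ := BlockSystem.exists_of_add_three_le (ι := Fin n) hb (by simpa using hn)
  refine ⟨X.holedGraph Y, ?_, not_violatesLaman_holedGraph ha hb X Y⟩
  rw [rigIndep_iff_stressFree]
  exact X.not_stressFree_holedGraph Y generalPosition_genericLeft (Fintype.card_fin a)
    (Fintype.card_fin b)

end Counterexample

section Characterization

variable {m n a b : ℕ} {U : Finset (Fin m × Fin n)}

lemma exists_rigCircuit_subset (hU : ¬ RigIndep m n a b U) : ∃ C ⊆ U, RigCircuit m n a b C := by
  obtain ⟨C, hCU, hC⟩ := exists_minimal_le_of_wellFoundedLT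
    (fun C : Finset (Fin m × Fin n) ↦ ¬ RigIndep m n a b C) U hU
  exact ⟨C, hCU, hC.prop, fun D hD ↦ not_not.1 (hC.not_prop_of_lt hD)⟩

lemma exists_stressFree_of_right_le_one_or_le_add_two (ha : a ≤ m) (h : b ≤ 1 ∨ m ≤ a + 2)
    (hU : ¬ ViolatesLaman m n a b U) :
    ∃ (x : Matrix (Fin m) (Fin a) ℚ) (y : Matrix (Fin n) (Fin b) ℚ), StressFree x y U := by
  rcases h with hb | hm
  · rcases Nat.le_one_iff_eq_zero_or_eq_one.1 hb with rfl | rfl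
    · exact exists_stressFree_of_right_eq_zero hU
    · exact exists_stressFree_of_right_eq_one ha hU
  · rcases hm.lt_or_eq with hlt | rfl
    · exact exists_stressFree_of_le_add_one (Nat.le_of_lt_succ hlt) hU
    · exact exists_stressFree_of_eq_add_two hU

lemma rigIndep_of_not_violatesLaman (ha : a ≤ m) (hb : b ≤ n)
    (h : a ≤ 1 ∨ b ≤ 1 ∨ m ≤ a + 2 ∨ n ≤ b + 2) (hU : ¬ ViolatesLaman m n a b U) :
    RigIndep m n a b U := by
  by_cases hleft : b ≤ 1 ∨ m ≤ a + 2
  · obtain ⟨x, y, hxy⟩ := exists_stressFree_of_right_le_one_or_le_add_two ha hleft hU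
    exact rigIndep_of_stressFree hxy
  · obtain ⟨y, x, hyx⟩ := exists_stressFree_of_right_le_one_or_le_add_two hb (by tauto)
      (mt ViolatesLaman.of_transpose hU)
    exact rigIndep_of_stressFree (.of_transpose hyx)

end Characterization

theorem all_circuits_laman_iff (m n a b : ℕ) (ha : a ≤ m) (hb : b ≤ n) :
    (∀ C : Finset (Fin m × Fin n), RigCircuit m n a b C → ViolatesLaman m n a b C) ↔
      (a ≤ 1 ∨ b ≤ 1 ∨ m ≤ a + 2 ∨ n ≤ b + 2) := by
  constructor
  · intro hcirc
    by_contra! ⟨ha', hb', hm, hn⟩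
    obtain ⟨U, hdep, hlaman⟩ := exists_not_rigIndep_and_not_violatesLaman ha' hb' hm hn
    obtain ⟨C, hCU, hC⟩ := exists_rigCircuit_subset hdep
    exact hlaman ((hcirc C hC).mono hCU)
  · intro h C hC
    by_contra hlaman
    exact hC.1 (rigIndep_of_not_violatesLaman ha hb h hlaman)
end
end

section
/- Let 0 ≤ a ≤ m and 0 ≤ b ≤ n, and let G ⊆ [m]×[n]. Define the left cone C_L G = G ∪ ({m+1}×[n]) ⊆ [m+1]×[n]. Then G is independent in the bipartite rigidity matroid B_{m,n}(a,b) if and only if C_L G is independent in the bipartite rigidity matroid B_{m+1,n}(a+1,b). -/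
open scoped Classical

noncomputable section

/-- The left cone of `G ⊆ [m]×[n]`: add a new left vertex joined to every vertex of
`[n]`. -/
def leftCone {m n : ℕ} (G : Set (Fin m × Fin n)) : Set (Fin (m + 1) × Fin n) :=
  (fun p : Fin m × Fin n => ((p.1.castSucc : Fin (m + 1)), p.2)) '' G ∪
    {p : Fin (m + 1) × Fin n | p.1 = Fin.last m}

/-!
A linear relation among the columns of the rigidity matrix is an equilibrium stress. As the cone
vertex has a nonzero last coordinate, the equilibrium equations of the cone in that coordinate
determine the weights at the cone vertex. Eliminating these weights leaves exactly the stresses of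
the placement in which the other left points are projected from the cone vertex. This placement is
again generic, because each projected coordinate differs from an original one by an element of the
field generated by the coordinates that the projection discards; and independence of columns is the
same for all generic placements.
-/

section Rigidity

variable {K P Q J L : Type*}

/-- The column of the bipartite rigidity matrix labeled by `e`, for left vertices placed at the rows
of `x` and right vertices placed at the rows of `y`; `rigCol` is the case of indeterminates. -/
def rigidityColumn [Zero K] [DecidableEq P] [DecidableEq Q] (x : Matrix P J K) (y : Matrix Q L K)
    (e : P × Q) : (J × Q) ⊕ (L × P) → K :=
  Sum.elim (fun r => if e.2 = r.2 then x e.1 r.1 else 0) fun r => if e.1 = r.2 then y e.2 r.1 else 0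

lemma map_comp_rigidityColumn {R S F : Type*} [Zero R] [Zero S] [FunLike F R S]
    [ZeroHomClass F R S] [DecidableEq P] [DecidableEq Q] (φ : F) (x : Matrix P J R)
    (y : Matrix Q L R) (e : P × Q) :
    φ ∘ rigidityColumn x y e = rigidityColumn (x.map φ) (y.map φ) e := by
  ext (r | r) <;> simp [rigidityColumn, apply_ite φ]

/-- A stress of the placement `(x, y)`: edge weights `w` whose equilibrium conditions hold at every
vertex, i.e. a linear relation among all columns of the rigidity matrix. -/
def IsStress_s11 [NonUnitalNonAssocSemiring K] [Fintype P] [Fintype Q] (x : Matrix P J K)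
    (y : Matrix Q L K) (w : Matrix P Q K) : Prop :=
  x.transpose * w = 0 ∧ w * y = 0

lemma sum_smul_rigidityColumn_eq_zero_iff [CommSemiring K] [Fintype P] [Fintype Q] [DecidableEq P]
    [DecidableEq Q] (x : Matrix P J K) (y : Matrix Q L K) (w : Matrix P Q K) :
    ∑ e : P × Q, w e.1 e.2 • rigidityColumn x y e = 0 ↔ IsStress_s11 x y w := by
  have left_row (j : J) (k : Q) :
      (∑ e : P × Q, w e.1 e.2 • rigidityColumn x y e) (Sum.inl (j, k)) = (x.transpose * w) j k := by
    simp [rigidityColumn, Fintype.sum_prod_type, Matrix.mul_apply, mul_comm]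
  have right_row (l : L) (i : P) :
      (∑ e : P × Q, w e.1 e.2 • rigidityColumn x y e) (Sum.inr (l, i)) = (w * y) i l := by
    simp [rigidityColumn, Fintype.sum_prod_type_right, Matrix.mul_apply]
  simp only [funext_iff, Sum.forall, Prod.forall, left_row, right_row, Pi.zero_apply, IsStress_s11,
    ← Matrix.ext_iff, Matrix.zero_apply]
  rw [forall_comm (α := L)]

lemma linearIndepOn_iff_of_fintype {ι V : Type*} [Ring K] [AddCommGroup V] [Module K V]
    [Fintype ι] {v : ι → V} {s : Set ι} :
    LinearIndepOn K v s ↔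
      ∀ w : ι → K, (∀ i, i ∉ s → w i = 0) → ∑ i, w i • v i = 0 → w = 0 := by
  rw [linearIndepOn_iff, Finsupp.equivFunOnFinite.forall_congr_left]
  simp [Finsupp.mem_supported', Finsupp.linearCombination_apply, Finsupp.sum_fintype,
    Finsupp.ext_iff, funext_iff]

lemma linearIndepOn_rigidityColumn_iff [CommRing K] [Fintype P] [Fintype Q] [DecidableEq P]
    [DecidableEq Q] {x : Matrix P J K} {y : Matrix Q L K} {G : Set (P × Q)} :
    LinearIndepOn K (rigidityColumn x y) G ↔
      ∀ w : Matrix P Q K, (∀ p q, (p, q) ∉ G → w p q = 0) → IsStress_s11 x y w → w = 0 := by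
  simp only [linearIndepOn_iff_of_fintype, ← sum_smul_rigidityColumn_eq_zero_iff]
  constructor
  · intro h w hG hw
    have hw' := h (Function.uncurry w) (fun e he => hG _ _ he) hw
    exact Matrix.ext fun p q => congrFun hw' (p, q)
  · intro h w hG hw
    have hw' := h (Matrix.of (Function.curry w)) (fun p q he => hG _ he) hw
    exact funext fun e => congrFun₂ hw' e.1 e.2

end Rigidity

section Cone

variable {K Q L : Type*} {m n : ℕ}

/-- The matrix `w` with the row `u` appended at the bottom. -/
def snocRow (w : Matrix (Fin m) Q K) (u : Q → K) : Matrix (Fin (m + 1)) Q K :=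
  Matrix.of (Fin.snoc (α := fun _ => Q → K) w u)

@[simp]
lemma snocRow_castSucc (w : Matrix (Fin m) Q K) (u : Q → K) (p : Fin m) (q : Q) :
    snocRow w u p.castSucc q = w p q :=
  congrFun (Fin.snoc_castSucc (α := fun _ => Q → K) u w p) q

@[simp]
lemma snocRow_last (w : Matrix (Fin m) Q K) (u : Q → K) (q : Q) :
    snocRow w u (Fin.last m) q = u q :=
  congrFun (Fin.snoc_last (α := fun _ => Q → K) u w) q

lemma snocRow_mul_eq_zero_iff [NonUnitalNonAssocSemiring K] [Fintype Q] {y : Matrix Q L K}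
    (w : Matrix (Fin m) Q K) (u : Q → K) :
    snocRow w u * y = 0 ↔ w * y = 0 ∧ Matrix.vecMul u y = 0 := by
  simp [← Matrix.ext_iff, funext_iff, Fin.forall_fin_succ', Matrix.mul_apply, Matrix.vecMul,
    dotProduct]

lemma castSucc_mem_leftCone {G : Set (Fin m × Fin n)} {p : Fin m} {q : Fin n} :
    (p.castSucc, q) ∈ leftCone G ↔ (p, q) ∈ G := by
  simp [leftCone, Fin.castSucc_ne_last]

lemma last_mem_leftCone (G : Set (Fin m × Fin n)) (q : Fin n) :
    (Fin.last m, q) ∈ leftCone G := by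
  simp [leftCone]

lemma snocRow_eq_zero_off_leftCone_iff [Zero K] {G : Set (Fin m × Fin n)}
    (w : Matrix (Fin m) (Fin n) K) (u : Fin n → K) :
    (∀ p q, (p, q) ∉ leftCone G → snocRow w u p q = 0) ↔
      ∀ p q, (p, q) ∉ G → w p q = 0 := by
  simp [Fin.forall_fin_succ', castSucc_mem_leftCone, last_mem_leftCone]

end Cone

section Projection

variable {K Q L : Type*} [Field K] {m n a : ℕ}

/-- The projection of the first `m` points from the last one onto the hyperplane where the last
coordinate vanishes. As a matrix it is the Schur complement of the bottom right entry of `x`, which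
should be nonzero. -/
def projectFromLast (x : Matrix (Fin (m + 1)) (Fin (a + 1)) K) : Matrix (Fin m) (Fin a) K :=
  Matrix.of fun p j => x p.castSucc j.castSucc -
    x p.castSucc (Fin.last a) * (x (Fin.last m) j.castSucc / x (Fin.last m) (Fin.last a))

/-- The weights on the edges at the cone vertex that balance the last coordinate of the weights `w`
on the remaining edges. -/
def coneWeight (x : Matrix (Fin (m + 1)) (Fin (a + 1)) K) (w : Matrix (Fin m) Q K) : Q → K :=
  -(x (Fin.last m) (Fin.last a))⁻¹ • Matrix.vecMul (fun p => x p.castSucc (Fin.last a)) w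

lemma projectFromLast_transpose_mul_apply (x : Matrix (Fin (m + 1)) (Fin (a + 1)) K)
    (w : Matrix (Fin m) Q K) (j : Fin a) (q : Q) :
    ((projectFromLast x).transpose * w) j q =
      ∑ p, x p.castSucc j.castSucc * w p q + x (Fin.last m) j.castSucc * coneWeight x w q := by
  simp only [Matrix.mul_apply, Matrix.transpose_apply, projectFromLast, Matrix.of_apply, coneWeight,
    Pi.smul_apply, Matrix.vecMul, dotProduct, smul_eq_mul, Finset.mul_sum, ← Finset.sum_add_distrib]
  exact Finset.sum_congr rfl fun p _ => by ring

lemma eq_coneWeight_iff {x : Matrix (Fin (m + 1)) (Fin (a + 1)) K}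
    (hx : x (Fin.last m) (Fin.last a) ≠ 0) {w : Matrix (Fin m) Q K} {u : Q → K} :
    u = coneWeight x w ↔ ∀ q,
      ∑ p, x p.castSucc (Fin.last a) * w p q + x (Fin.last m) (Fin.last a) * u q = 0 := by
  refine funext_iff.trans (forall_congr' fun q => ?_)
  simp only [coneWeight, Pi.smul_apply, Matrix.vecMul, dotProduct, smul_eq_mul]
  rw [neg_mul, ← mul_neg, eq_inv_mul_iff_mul_eq₀ hx, eq_neg_iff_add_eq_zero, add_comm]

lemma transpose_mul_snocRow_eq_zero_iff {x : Matrix (Fin (m + 1)) (Fin (a + 1)) K}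
    (hx : x (Fin.last m) (Fin.last a) ≠ 0) (w : Matrix (Fin m) Q K) (u : Q → K) :
    x.transpose * snocRow w u = 0 ↔
      (projectFromLast x).transpose * w = 0 ∧ u = coneWeight x w := by
  have entry (j : Fin (a + 1)) (q : Q) : (x.transpose * snocRow w u) j q =
      ∑ p, x p.castSucc j * w p q + x (Fin.last m) j * u q := by
    simp [Matrix.mul_apply, Fin.sum_univ_castSucc]
  simp only [← Matrix.ext_iff, entry, Fin.forall_fin_succ', Matrix.zero_apply,
    projectFromLast_transpose_mul_apply, ← eq_coneWeight_iff hx]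
  exact and_congr_left fun hu => by rw [hu]

lemma coneWeight_vecMul_eq_zero [Fintype Q] (x : Matrix (Fin (m + 1)) (Fin (a + 1)) K)
    {y : Matrix Q L K} {w : Matrix (Fin m) Q K} (hw : w * y = 0) :
    Matrix.vecMul (coneWeight x w) y = 0 := by
  rw [coneWeight, Matrix.smul_vecMul, Matrix.vecMul_vecMul, hw, Matrix.vecMul_zero, smul_zero]

lemma isStress_snocRow_iff [Fintype Q] {x : Matrix (Fin (m + 1)) (Fin (a + 1)) K}
    (hx : x (Fin.last m) (Fin.last a) ≠ 0) {y : Matrix Q L K} (w : Matrix (Fin m) Q K)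
    (u : Q → K) :
    IsStress_s11 x y (snocRow w u) ↔ IsStress_s11 (projectFromLast x) y w ∧ u = coneWeight x w := by
  rw [IsStress_s11, IsStress_s11, transpose_mul_snocRow_eq_zero_iff hx, snocRow_mul_eq_zero_iff]
  constructor
  · rintro ⟨⟨hxw, hu⟩, hwy, -⟩
    exact ⟨⟨hxw, hwy⟩, hu⟩
  · rintro ⟨⟨hxw, hwy⟩, rfl⟩
    exact ⟨⟨hxw, rfl⟩, hwy, coneWeight_vecMul_eq_zero x hwy⟩

theorem linearIndepOn_projectFromLast_iff_leftCone {x : Matrix (Fin (m + 1)) (Fin (a + 1)) K}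
    (hx : x (Fin.last m) (Fin.last a) ≠ 0) (y : Matrix (Fin n) L K) (G : Set (Fin m × Fin n)) :
    LinearIndepOn K (rigidityColumn (projectFromLast x) y) G ↔
      LinearIndepOn K (rigidityColumn x y) (leftCone G) := by
  simp only [linearIndepOn_rigidityColumn_iff]
  constructor
  · intro h w' hG hstress
    obtain ⟨w, u, rfl⟩ : ∃ w u, w' = snocRow w u :=
      ⟨_, _, (Fin.snoc_init_self (α := fun _ => Fin n → K) w').symm⟩
    obtain ⟨hw, hu⟩ := (isStress_snocRow_iff hx w u).1 hstress
    obtain rfl : w = 0 := h w ((snocRow_eq_zero_off_leftCone_iff w u).1 hG) hw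
    obtain rfl : u = 0 := by simp [hu, coneWeight]
    ext p q
    cases p using Fin.lastCases <;> simp
  · intro h w hG hstress
    have hcone := h _ ((snocRow_eq_zero_off_leftCone_iff w (coneWeight x w)).2 hG)
      ((isStress_snocRow_iff hx w _).2 ⟨hstress, rfl⟩)
    ext p q
    simpa using congrFun₂ hcone p.castSucc q

end Projection

section Generic

open MvPolynomial

lemma algebraicIndependent_sub_of_mem_adjoin {k K ι σ : Type*} [Field k] [Field K] [Algebra k K]
    {z : σ → K} (hz : AlgebraicIndependent k z) {f : ι → σ} (hf : Function.Injective f)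
    {c : ι → K} (hc : ∀ i, c i ∈ IntermediateField.adjoin k (z '' (Set.range f)ᶜ)) :
    AlgebraicIndependent k fun i => z (f i) - c i := by
  let F := IntermediateField.adjoin k (z '' (Set.range f)ᶜ)
  have hzF : AlgebraicIndependent F (z ∘ f) :=
    IntermediateField.algebraicIndependent_adjoin_iff.2 <|
      (hz.adjoin_of_disjoint disjoint_compl_left).comp (Set.rangeFactorization f)
        (Set.rangeFactorization_injective.2 hf)
  have htrans (i : ι) :
      Transcendental F (Polynomial.X - Polynomial.C (⟨c i, hc i⟩ : F) : Polynomial F) := by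
    simpa using (Polynomial.transcendental_X F).aeval (Polynomial.X - Polynomial.C ⟨c i, hc i⟩)
      (by simp) (by simp)
  have htranslate := (hzF.polynomial_aeval_of_transcendental htrans).restrictScalars
    (algebraMap k F).injective
  simpa using htranslate

/-- The placement `(x, y)` is generic over `k`: its coordinates are algebraically independent. -/
def IsGeneric (k : Type*) {K P Q J L : Type*} [CommRing k] [CommRing K] [Algebra k K]
    (x : Matrix P J K) (y : Matrix Q L K) : Prop :=
  AlgebraicIndependent k (Sum.elim (Function.uncurry x) (Function.uncurry y))

lemma IsGeneric.left_apply_ne_zero {k K P Q J L : Type*} [CommRing k] [Nontrivial k] [CommRing K]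
    [Algebra k K] {x : Matrix P J K} {y : Matrix Q L K} (hxy : IsGeneric k x y) (p : P) (j : J) :
    x p j ≠ 0 :=
  hxy.ne_zero (Sum.inl (p, j))

/-- The generic left points, whose coordinates are indeterminates. -/
def leftIndeterminates (k P Q J L : Type*) [CommSemiring k] :
    Matrix P J (MvPolynomial ((P × J) ⊕ (Q × L)) k) :=
  Matrix.of fun p j => X (Sum.inl (p, j))

/-- The generic right points, whose coordinates are indeterminates. -/
def rightIndeterminates (k P Q J L : Type*) [CommSemiring k] :
    Matrix Q L (MvPolynomial ((P × J) ⊕ (Q × L)) k) :=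
  Matrix.of fun q l => X (Sum.inr (q, l))

lemma isGeneric_map_indeterminates {k P Q J L A : Type*} [CommRing k] [CommRing A] [Algebra k A]
    [Algebra (MvPolynomial ((P × J) ⊕ (Q × L)) k) A]
    [IsScalarTower k (MvPolynomial ((P × J) ⊕ (Q × L)) k) A]
    [FaithfulSMul (MvPolynomial ((P × J) ⊕ (Q × L)) k) A] :
    IsGeneric k ((leftIndeterminates k P Q J L).map (algebraMap _ A))
      ((rightIndeterminates k P Q J L).map (algebraMap _ A)) := by
  have hX := (algebraicIndependent_X ((P × J) ⊕ (Q × L)) k).map'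
    (f := IsScalarTower.toAlgHom k (MvPolynomial ((P × J) ⊕ (Q × L)) k) A)
    (FaithfulSMul.algebraMap_injective _ A)
  rw [IsGeneric]
  convert hX using 1
  ext (r | r) <;> rfl

lemma IsGeneric.linearIndepOn_iff_indeterminates {k K P Q J L : Type*} [CommRing k] [CommRing K]
    [IsDomain K] [Algebra k K] [Finite P] [Finite Q] [Finite J] [Finite L] [DecidableEq P]
    [DecidableEq Q] {x : Matrix P J K} {y : Matrix Q L K} (hxy : IsGeneric k x y)
    (G : Set (P × Q)) :
    LinearIndepOn K (rigidityColumn x y) G ↔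
      LinearIndepOn (MvPolynomial ((P × J) ⊕ (Q × L)) k)
        (rigidityColumn (leftIndeterminates k P Q J L) (rightIndeterminates k P Q J L)) G := by
  let φ : MvPolynomial ((P × J) ⊕ (Q × L)) k →ₐ[k] K :=
    aeval (Sum.elim (Function.uncurry x) (Function.uncurry y))
  let : Algebra (MvPolynomial ((P × J) ⊕ (Q × L)) k) K := φ.toAlgebra
  have : FaithfulSMul (MvPolynomial ((P × J) ⊕ (Q × L)) k) K :=
    (faithfulSMul_iff_algebraMap_injective _ _).2 hxy
  have hx : (leftIndeterminates k P Q J L).map (algebraMap _ K) = x :=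
    Matrix.ext fun p j => aeval_X _ (Sum.inl (p, j))
  have hy : (rightIndeterminates k P Q J L).map (algebraMap _ K) = y :=
    Matrix.ext fun q l => aeval_X _ (Sum.inr (q, l))
  rw [LinearIndepOn, LinearIndepOn, ← linearIndependent_algebraMap_comp_iff (S := K)
    (R := MvPolynomial ((P × J) ⊕ (Q × L)) k)]
  simp only [map_comp_rigidityColumn, hx, hy]

lemma IsGeneric.projectFromLast {k K Q L : Type*} [Field k] [Field K] [Algebra k K] {m a : ℕ}
    {x : Matrix (Fin (m + 1)) (Fin (a + 1)) K} {y : Matrix Q L K} (hxy : IsGeneric k x y) :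
    IsGeneric k (projectFromLast x) y := by
  let f : (Fin m × Fin a) ⊕ (Q × L) → (Fin (m + 1) × Fin (a + 1)) ⊕ (Q × L) :=
    Sum.map (Prod.map Fin.castSucc Fin.castSucc) id
  have hf : Function.Injective f :=
    ((Fin.castSucc_injective m).prodMap (Fin.castSucc_injective a)).sumMap Function.injective_id
  let z := Sum.elim (Function.uncurry x) (Function.uncurry y)
  let F := IntermediateField.adjoin k (z '' (Set.range f)ᶜ)
  have mem_F (p : Fin (m + 1)) (j : Fin (a + 1)) (h : p = Fin.last m ∨ j = Fin.last a) :
      x p j ∈ F := by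
    refine IntermediateField.subset_adjoin k _ ⟨Sum.inl (p, j), ?_, rfl⟩
    rcases h with rfl | rfl <;> simp [f, Fin.castSucc_ne_last]
  let c : (Fin m × Fin a) ⊕ (Q × L) → K := Sum.elim
    (fun r => x r.1.castSucc (Fin.last a) *
      (x (Fin.last m) r.2.castSucc / x (Fin.last m) (Fin.last a))) 0
  have hc (i) : c i ∈ F := by
    rcases i with r | _
    · exact mul_mem (mem_F _ _ (.inr rfl)) (div_mem (mem_F _ _ (.inl rfl)) (mem_F _ _ (.inl rfl)))
    · exact zero_mem F
  have htranslate := algebraicIndependent_sub_of_mem_adjoin hxy hf hc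
  rw [IsGeneric]
  convert htranslate using 1
  ext (r | r)
  · rfl
  · simp [f, c]

lemma rigIndep_iff_linearIndepOn (m n a b : ℕ) (G : Set (Fin m × Fin n)) :
    RigIndep m n a b G ↔ LinearIndepOn (RField m n a b) (rigidityColumn
      ((leftIndeterminates ℚ (Fin m) (Fin n) (Fin a) (Fin b)).map (algebraMap _ (RField m n a b)))
      ((rightIndeterminates ℚ (Fin m) (Fin n) (Fin a) (Fin b)).map
        (algebraMap _ (RField m n a b)))) G :=
  iff_of_eq (congrArg (LinearIndepOn (RField m n a b) · G) (by ext e (r | r) <;> rfl))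

theorem cone_lemma_general {k K K' : Type*} [Field k] [CommRing K] [IsDomain K] [Field K']
    [Algebra k K] [Algebra k K'] {m n a : ℕ} {L : Type*} [Finite L] {x : Matrix (Fin m) (Fin a) K}
    {y : Matrix (Fin n) L K} {x' : Matrix (Fin (m + 1)) (Fin (a + 1)) K'} {y' : Matrix (Fin n) L K'}
    (hxy : IsGeneric k x y) (hxy' : IsGeneric k x' y') (G : Set (Fin m × Fin n)) :
    LinearIndepOn K (rigidityColumn x y) G ↔
      LinearIndepOn K' (rigidityColumn x' y') (leftCone G) := by
  rw [← linearIndepOn_projectFromLast_iff_leftCone (hxy'.left_apply_ne_zero _ _),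
    hxy.linearIndepOn_iff_indeterminates, hxy'.projectFromLast.linearIndepOn_iff_indeterminates]

end Generic

theorem cone_lemma (m n a b : ℕ) (ha : a ≤ m) (hb : b ≤ n) (G : Set (Fin m × Fin n)) :
    RigIndep m n a b G ↔ RigIndep (m + 1) n (a + 1) b (leftCone G) := by
  rw [rigIndep_iff_linearIndepOn, rigIndep_iff_linearIndepOn]
  exact cone_lemma_general (k := ℚ) isGeneric_map_indeterminates isGeneric_map_indeterminates G
end
end

section
/- Let F be any field and let m, n, s, r be integers with 0 ≤ s ≤ m and 0 ≤ r ≤ n. If a set E ⊆ [m]×[n] is independent in the tensor matroid T_{m,n}(s,r,F), then E is independent in the tensor matroid T_{m,n}(s,r,ℚ). -/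
open scoped Classical

noncomputable section

/-- The field of fractions of the polynomial ring over `F` in variables
`X i k` (`i ∈ [m]`, `k ∈ [s]`) and `Y j l` (`j ∈ [n]`, `l ∈ [r]`). -/
abbrev TField (F : Type*) [Field F] (m n s r : ℕ) :=
  FractionRing (MvPolynomial ((Fin m × Fin s) ⊕ (Fin n × Fin r)) F)

/-- The vector `u_i ⊗ v_j ∈ K_F^{[s]×[r]}` with `(k,l)`-entry `X_{ik} · Y_{jl}`. -/
noncomputable def tvec (F : Type*) [Field F] (m n s r : ℕ) (e : Fin m × Fin n) :
    Fin s × Fin r → TField F m n s r := fun kl =>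
  algebraMap (MvPolynomial ((Fin m × Fin s) ⊕ (Fin n × Fin r)) F) (TField F m n s r)
      (MvPolynomial.X (Sum.inl (e.1, kl.1))) *
  algebraMap (MvPolynomial ((Fin m × Fin s) ⊕ (Fin n × Fin r)) F) (TField F m n s r)
      (MvPolynomial.X (Sum.inr (e.2, kl.2)))

/-- `E` is independent in the tensor matroid `T_{m,n}(s,r,F)`: the family
`{u_i ⊗ v_j : (i,j) ∈ E}` is linearly independent over `K_F`. -/
def TensorIndep (F : Type*) [Field F] (m n s r : ℕ) (E : Set (Fin m × Fin n)) : Prop :=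
  LinearIndependent (TField F m n s r) (fun e : E => tvec F m n s r e)

/-- `E` is spanning in the tensor matroid `T_{m,n}(s,r,F)`: the family
`{u_i ⊗ v_j : (i,j) ∈ E}` spans `K_F^{[s]×[r]}`. -/
def TensorSpanning (F : Type*) [Field F] (m n s r : ℕ) (E : Set (Fin m × Fin n)) : Prop :=
  Submodule.span (TField F m n s r) (tvec F m n s r '' E) = ⊤

/-!
A finite family of vectors over a field is independent exactly when some maximal minor of the matrix
with these rows is nonzero. For the vectors `u_i ⊗ v_j` these minors are the images of the same
polynomials with integer coefficients for every field `F`. A minor with nonzero image over `F` is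
nonzero over `ℤ`, hence over `ℚ`, because `ℤ[X, Y]` embeds in `ℚ(X, Y)`.
-/

theorem span_range_col_eq_top_of_linearIndependent_row {ι κ K : Type*} [Field K] [Finite ι]
    {A : Matrix ι κ K} (hA : LinearIndependent K A.row) :
    Submodule.span K (Set.range A.col) = ⊤ := by
  have := Fintype.ofFinite ι
  by_contra hspan
  obtain ⟨f, hf, hle⟩ := Submodule.exists_le_ker_of_lt_top _ (lt_top_iff_ne_top.2 hspan)
  -- A functional vanishing on every column is a linear relation between the rows.
  have relation : ∑ i, f (Pi.single i 1) • A.row i = 0 := by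
    ext k
    have hcol : f (A.col k) = 0 := hle (Submodule.subset_span ⟨k, rfl⟩)
    rw [← (Pi.basisFun K ι).sum_repr (A.col k)] at hcol
    simpa [mul_comm] using hcol
  refine hf (LinearMap.pi_ext' fun i => LinearMap.ext_ring ?_)
  exact Fintype.linearIndependent_iff.1 hA _ relation i

theorem exists_det_submatrix_ne_zero_of_linearIndependent_row {ι κ K : Type*} [Field K]
    [Fintype ι] [DecidableEq ι] {A : Matrix ι κ K} (hA : LinearIndependent K A.row) :
    ∃ c : ι → κ, (A.submatrix id c).det ≠ 0 := by
  obtain ⟨g, hg, -, hli⟩ := Submodule.exists_fun_fin_finrank_span_eq K (Set.range A.col)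
  choose c hc using hg
  have hcard : Fintype.card ι = Module.finrank K (Submodule.span K (Set.range A.col)) := by
    rw [span_range_col_eq_top_of_linearIndependent_row hA, finrank_top,
      Module.finrank_fintype_fun_eq_card]
  let e := Fintype.equivFinOfCardEq hcard
  have hcols : LinearIndependent K (A.submatrix id (c ∘ e)).col := by
    rw [show (A.submatrix id (c ∘ e)).col = g ∘ e from funext fun i => hc (e i)]
    exact hli.comp e e.injective
  exact ⟨c ∘ e, ((Matrix.isUnit_iff_isUnit_det _).1
    (Matrix.linearIndependent_cols_iff_isUnit.1 hcols)).ne_zero⟩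

theorem linearIndependent_row_of_det_submatrix_ne_zero {ι κ R : Type*} [CommRing R] [IsDomain R]
    [Fintype ι] [DecidableEq ι] {A : Matrix ι κ R} {c : ι → κ} (hc : (A.submatrix id c).det ≠ 0) :
    LinearIndependent R A.row :=
  .of_comp (LinearMap.funLeft R R c) (Matrix.linearIndependent_rows_of_det_ne_zero hc)

theorem linearIndependent_row_map_of_injective {ι κ R K S : Type*} [CommRing R] [Field K]
    [CommRing S] [IsDomain S] (A : Matrix ι κ R) (f : R →+* K) {g : R →+* S}
    (hg : Function.Injective g) (hA : LinearIndependent K (A.map f).row) :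
    LinearIndependent S (A.map g).row := by
  rw [linearIndependent_iff_finset_linearIndependent] at hA ⊢
  intro t
  let B : Matrix t κ R := A.submatrix (↑) id
  have hB : LinearIndependent K (B.map f).row := hA t
  obtain ⟨c, hc⟩ := exists_det_submatrix_ne_zero_of_linearIndependent_row hB
  have hminor : (B.submatrix id c).det ≠ 0 := by
    rw [Matrix.submatrix_map, ← RingHom.mapMatrix_apply, ← RingHom.map_det] at hc
    exact ne_zero_of_map hc
  have hc' : ((B.map g).submatrix id c).det ≠ 0 := by
    rw [Matrix.submatrix_map, ← RingHom.mapMatrix_apply, ← RingHom.map_det]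
    exact (map_ne_zero_iff g hg).2 hminor
  exact linearIndependent_row_of_det_submatrix_ne_zero hc'

/-- The matrix over `R[X, Y]` whose row `(i, j)` is the tensor product `u_i ⊗ v_j` of generic
vectors `u_i = (X_{ik})_k` and `v_j = (Y_{jl})_l`. It specializes to `tvec` over any field receiving
a ring homomorphism from `R`. -/
def genericTensorMatrix (R : Type*) [CommSemiring R] (α β σ τ : Type*) :
    Matrix (α × β) (σ × τ) (MvPolynomial ((α × σ) ⊕ (β × τ)) R) :=
  .of fun e kl => MvPolynomial.X (.inl (e.1, kl.1)) * MvPolynomial.X (.inr (e.2, kl.2))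

/-- The ring homomorphism `R[X, Y] → F(X, Y)` that applies `φ : R → F` to the coefficients. -/
def toTField {R F : Type*} [CommSemiring R] [Field F] (φ : R →+* F) (m n s r : ℕ) :
    MvPolynomial ((Fin m × Fin s) ⊕ (Fin n × Fin r)) R →+* TField F m n s r :=
  (algebraMap _ _).comp (MvPolynomial.map φ)

theorem toTField_injective {R F : Type*} [CommSemiring R] [Field F] {φ : R →+* F}
    (hφ : Function.Injective φ) (m n s r : ℕ) : Function.Injective (toTField φ m n s r) :=
  (IsFractionRing.injective _ _).comp (MvPolynomial.map_injective φ hφ)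

theorem tensorIndep_iff_linearIndependent_row_map {R F : Type*} [CommSemiring R] [Field F]
    (φ : R →+* F) {m n s r : ℕ} {E : Set (Fin m × Fin n)} :
    TensorIndep F m n s r E ↔ LinearIndependent (TField F m n s r)
      (((genericTensorMatrix R (Fin m) (Fin n) (Fin s) (Fin r)).submatrix
        (Subtype.val : E → Fin m × Fin n) id).map (toTField φ m n s r)).row := by
  rw [TensorIndep]
  congr! 1
  ext e kl
  simp [tvec, genericTensorMatrix, toTField]

theorem indep_char_p_implies_indep_char_zero_general {R F K : Type*} [CommRing R] [Field F]
    [Field K] (φ : R →+* F) {ψ : R →+* K} (hψ : Function.Injective ψ) (m n s r : ℕ)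
    (E : Set (Fin m × Fin n)) (hE : TensorIndep F m n s r E) : TensorIndep K m n s r E := by
  rw [tensorIndep_iff_linearIndependent_row_map φ] at hE
  rw [tensorIndep_iff_linearIndependent_row_map ψ]
  exact linearIndependent_row_map_of_injective _ (toTField φ m n s r)
    (toTField_injective hψ m n s r) hE

theorem indep_char_p_implies_indep_char_zero (F : Type*) [Field F] (m n s r : ℕ)
    (hs : s ≤ m) (hr : r ≤ n) (E : Set (Fin m × Fin n)) :
    TensorIndep F m n s r E → TensorIndep ℚ m n s r E :=
  indep_char_p_implies_indep_char_zero_general (Int.castRingHom F)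
    (RingHom.injective_int (Int.castRingHom ℚ)) m n s r E
end
end
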